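/- For every sentence J, the colored dual immaculate function expands positively into the colored fundamental basis as 𝔖*_J = Σ_C L_{J,C} F_C, where the sum runs over all sentences C with |C| = |J| and L_{J,C} is the number of standard colored immaculate tableaux of shape J with colored descent composition C; equivalently, 𝔖*_J = Σ_U F_{co_A(U)}, summed over all standard colored immaculate tableaux U of shape J. -/

import Mathlib

open scoped BigOperators

namespace ColoredImm

variable {A : Type*}

/-- A *weak sentence* over the alphabet `A`: a finite list of words (words may be empty). -/
abbrev Sentence (A : Type*) := List (List A)

/-- A genuine *sentence*: all of its words are nonempty. -/
def IsSentence (I : Sentence A) : Prop := ∀ w ∈ I, w ≠ []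

/-- The size `|I|` of a sentence: its total number of letters. -/
def size (I : Sentence A) : ℕ := (I.map List.length).sum

/-- The word lengths `wℓ(I)` of a sentence. -/
def wl (I : Sentence A) : List ℕ := I.map List.length

/-- The flattening of a weak sentence: delete all empty words. -/
def flattenWS (I : Sentence A) : Sentence A := I.filter (fun w => !w.isEmpty)

/-- `Refines J I` means `J ⪯ I`: the sentence `I` can be obtained by concatenating
some adjacent words of `J` (so `J` is a refinement of `I`, and `I` a coarsening of `J`). -/
def Refines (J I : Sentence A) : Prop :=
  ∃ P : List (Sentence A), (∀ p ∈ P, p ≠ []) ∧ P.flatten = J ∧ P.map List.flatten = I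

/-! ### Fillings and colored immaculate tableaux -/

/-- An integer filling of a diagram, recorded row by row. -/
abbrev Filling := List (List ℕ)

/-- The entry of a filling at box `b = (row, column)` (0-indexed), with default `0`. -/
def entryAt (f : Filling) (b : ℕ × ℕ) : ℕ := (f.getD b.1 []).getD b.2 0

/-- `IsCIT I f`: `f` is a colored immaculate tableau of shape `I`; that is, `f` has the
same shape as the colored composition diagram of `I`, its entries are positive integers
weakly increasing left to right along each row, and the entries in the first column are
strictly increasing from top to bottom. -/
def IsCIT (I : Sentence A) (f : Filling) : Prop :=
  f.map List.length = I.map List.length ∧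
  (∀ row ∈ f, row.Chain' (· ≤ ·)) ∧
  (f.filterMap List.head?).Chain' (· < ·) ∧
  (∀ x ∈ f.flatten, 1 ≤ x)

/-- The colors (letters of `w`) of the boxes of one row whose entry (in `row`) is `v`,
read from left to right. -/
def rowWith (w : List A) (row : List ℕ) (v : ℕ) : List A :=
  ((w.zip row).filter (fun p => p.2 == v)).map Prod.fst

/-- The word of the type of a tableau at value `v`: the colors of all boxes with entry `v`,
read left to right, from the bottom row up to the top row. -/
def typeWord (I : Sentence A) (f : Filling) (v : ℕ) : List A :=
  (((I.zip f).reverse).map (fun p => rowWith p.1 p.2 v)).flatten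

/-- `HasType I f B` : the tableau `f` (of shape `I`) has type the weak sentence `B`,
i.e. for every positive integer `v`, the colors of the boxes of `f` containing `v`
(read left to right, bottom to top) form the `v`-th word of `B`. -/
def HasType (I : Sentence A) (f : Filling) (B : Sentence A) : Prop :=
  ∀ v, 1 ≤ v → typeWord I f v = B.getD (v - 1) []

/-- `K_{J,B}`: the number of colored immaculate tableaux of shape `J` and type `B`. -/
noncomputable def KJB (J B : Sentence A) : ℕ :=
  Set.ncard {f : Filling | IsCIT J f ∧ HasType J f B}

/-! ### Standardization -/

/-- The list of boxes of a filling. -/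
def boxes (f : Filling) : List (ℕ × ℕ) :=
  ((List.range f.length).map
    (fun r => (List.range (f.getD r []).length).map (fun j => (r, j)))).flatten

/-- `beforeB f b b'`: box `b` comes strictly before box `b'` in the type-reading order of `f`
(smaller entries first; among equal entries, lower rows first, and within a row left to right). -/
def beforeB (f : Filling) (b b' : ℕ × ℕ) : Bool :=
  entryAt f b < entryAt f b' ||
    (entryAt f b == entryAt f b' && (b'.1 < b.1 || (b.1 == b'.1 && b.2 < b'.2)))

/-- The standardization of a filling: each box is renumbered (starting from `1`)
according to its position in the type-reading order. -/
def stdFill (f : Filling) : Filling :=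
  (List.range f.length).map (fun r =>
    (List.range (f.getD r []).length).map (fun j =>
      1 + ((boxes f).filter (fun b' => beforeB f b' (r, j))).length))

/-- The number of boxes of a filling. -/
def nBoxes (f : Filling) : ℕ := f.flatten.length

/-- A filling of `n` boxes is standard when its entries are exactly `1, …, n`,
each appearing once. -/
def IsStandardF (f : Filling) : Prop := f.flatten.Perm (List.range' 1 (nBoxes f))

/-! ### Descents and the colored descent composition -/

/-- The (0-indexed) row containing the value `v` in a standard filling. -/
def rowOf (f : Filling) (v : ℕ) : ℕ := f.findIdx (fun row => row.contains v)

/-- The sorted list of descents of a standard filling: those `i` with `1 ≤ i ≤ n-1`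
such that `i+1` lies in a strictly lower row than `i`. -/
def descList (f : Filling) : List ℕ :=
  (List.range' 1 (nBoxes f - 1)).filter (fun i => decide (rowOf f i < rowOf f (i + 1)))

/-- The composition of `n` associated to a set of split positions `d_1 < … < d_k`:
`(d_1, d_2 - d_1, …, n - d_k)`. -/
def compOf (ds : List ℕ) (n : ℕ) : List ℕ :=
  List.zipWith (fun a b => b - a) (0 :: ds) (ds ++ [n])

/-- Split a word into a sentence according to a composition. -/
def splitByComp : List A → List ℕ → List (List A)
  | _, [] => []
  | w, a :: rest => w.take a :: splitByComp (w.drop a) rest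

/-- The color of the box containing the value `v` in a standard filling of shape `I`. -/
def colorOf [Inhabited A] (I : Sentence A) (f : Filling) (v : ℕ) : A :=
  (I.getD (rowOf f v) []).getD ((f.getD (rowOf f v) []).findIdx (fun x => x == v)) default

/-- The maximal word of the colored descent composition of a standard filling of shape `I`:
the colors of its boxes read in the order of their integer entries. -/
def readWord [Inhabited A] (I : Sentence A) (f : Filling) : List A :=
  (List.range (nBoxes f)).map (fun i => colorOf I f (i + 1))

/-- The colored descent composition `co_A(U)` of a standard colored immaculate tableau:
read the colors of the boxes in the order of their entries, starting a new word
immediately after each descent. -/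
def coA [Inhabited A] (I : Sentence A) (f : Filling) : Sentence A :=
  if nBoxes f = 0 then [] else splitByComp (readWord I f) (compOf (descList f) (nBoxes f))

/-- `L_{J,C}`: the number of standard colored immaculate tableaux of shape `J`
with colored descent composition `C`. -/
noncomputable def LJC [Inhabited A] (J C : Sentence A) : ℕ :=
  Set.ncard {f : Filling | IsCIT J f ∧ IsStandardF f ∧ coA J f = C}

/-! ### The colored quasisymmetric functions `QSym_A` -/

/-- A (normal form of a) monomial in the partially commutative variables `x_{a,i}`:
a pair consisting of the list of words `(w_1, …, w_m)` and the list of (strictly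
increasing, positive) second indices `(j_1 < … < j_m)`, representing
`x_{w_1,j_1} ⋯ x_{w_m,j_m}`. -/
abbrev Mono (A : Type*) := List (List A) × List ℕ

/-- A colored quasisymmetric "series": a formal linear combination of monomials,
recorded by its coefficient function.  `QSym_A` itself is the span of the colored
monomial functions `MQ I` inside this space. -/
abbrev QSymA (A : Type*) := Mono A → ℚ

/-- Validity of a monomial normal form: words and indices match up, the indices are
strictly increasing positive integers, and all words are nonempty. -/
def ValidMono (m : Mono A) : Prop :=
  m.1.length = m.2.length ∧ m.2.Chain' (· < ·) ∧ (∀ j ∈ m.2, 1 ≤ j) ∧ ∀ w ∈ m.1, w ≠ []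

open Classical in
/-- The colored monomial quasisymmetric function `M_I`: the sum of all monomials
`x_{w_1,j_1} ⋯ x_{w_m,j_m}` with `j_1 < … < j_m`, where `I = (w_1, …, w_m)`. -/
noncomputable def MQ (I : Sentence A) : QSymA A := fun m =>
  if m.1 = I ∧ ValidMono m then 1 else 0

/-- The largest entry of a filling. -/
def maxEntry (f : Filling) : ℕ := f.flatten.foldr max 0

/-- The monomial `x_T` of a colored immaculate tableau `T = f` of shape `I`:
for `T` of type `B = (u_1, …, u_j)` it is `x_{u_1,1} x_{u_2,2} ⋯ x_{u_j,j}`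
(empty words are skipped). -/
def monoOf (I : Sentence A) (f : Filling) : Mono A :=
  let vs := ((List.range (maxEntry f)).map (· + 1)).filter (fun v => !(typeWord I f v).isEmpty)
  (vs.map (typeWord I f), vs)

/-- The colored dual immaculate function `𝔖*_J = Σ_T x_T`, the sum of the monomials of all
colored immaculate tableaux `T` of shape `J` (its coefficient at a monomial `m` is the
number of such tableaux with `x_T = m`). -/
noncomputable def dualImm (J : Sentence A) : QSymA A := fun m =>
  (Set.ncard {f : Filling | IsCIT J f ∧ monoOf J f = m} : ℚ)

/-- The colored fundamental quasisymmetric function `F_I = Σ_{J ⪯ I} M_J`. -/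
noncomputable def FQ (I : Sentence A) : QSymA A :=
  ∑ᶠ J ∈ {J : Sentence A | Refines J I}, MQ J

/-! ### The colored immaculate descent graph -/

/-- Edges of the colored immaculate descent graph: a directed edge from `I` to `J` (`J ≠ I`)
whenever some standard colored immaculate tableau of shape `I` has colored descent
composition `J`. -/
def IsEdge [Inhabited A] (I J : Sentence A) : Prop := J ≠ I ∧ LJC I J ≠ 0

/-- Directed paths from `I` to `K` in the colored immaculate descent graph, recorded by
their (nonempty) lists of successive vertices; the path `[I]` is the empty path at `I`. -/
def PathsFromTo [Inhabited A] (I K : Sentence A) : Set (List (Sentence A)) :=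
  {p | p.head? = some I ∧ p.getLast? = some K ∧ p.Chain' IsEdge}

/-- The signed weight `(-1)^{ℓ(𝒫)} prod(𝒫)` of a directed path `𝒫`:
`ℓ(𝒫)` is its number of edges and `prod(𝒫)` the product of its edge weights `L_{I,J}`. -/
noncomputable def pathWeight [Inhabited A] (p : List (Sentence A)) : ℚ :=
  ((-1 : ℚ)) ^ (p.length - 1) * ((p.zip p.tail).map (fun e => (LJC e.1 e.2 : ℚ))).prod

/-- `L⁻¹_{I,K} = Σ_𝒫 (-1)^{ℓ(𝒫)} prod(𝒫)`, summed over all directed paths `𝒫`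
from `I` to `K` in the colored immaculate descent graph. -/
noncomputable def Linv [Inhabited A] (I K : Sentence A) : ℚ :=
  ∑ᶠ p ∈ PathsFromTo I K, pathWeight p

/-! ### The colored noncommutative symmetric functions `NSym_A` -/

/-- A formal series over the complete homogeneous basis `{H_I}` of `NSym_A`, recorded by its
coefficient function on (weak) sentences.  `NSym_A` itself consists of the finitely
supported elements supported on genuine sentences; see `InNSym`. -/
abbrev NSymA (A : Type*) := Sentence A → ℚ

/-- Membership in `NSym_A` proper: finitely supported, and supported on genuine sentences. -/
def InNSym (f : NSymA A) : Prop :=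
  (Function.support f).Finite ∧ ∀ I, f I ≠ 0 → IsSentence I

open Classical in
/-- The colored complete homogeneous noncommutative symmetric function
`H_I = H_{w_1} ⋯ H_{w_k}`. -/
noncomputable def Hd (I : Sentence A) : NSymA A := fun J => if J = I then 1 else 0

/-- `H_w` for a single word `w`, with `H_∅ = 1`. -/
noncomputable def Hw (w : List A) : NSymA A := if w.isEmpty then Hd [] else Hd [w]

/-- Multiplication in `NSym_A` (the concatenation product, extended to series):
`H_I · H_J = H_{I ⬝ J}`. -/
def mulN (f g : NSymA A) : NSymA A := fun I =>
  ∑ j ∈ Finset.range (I.length + 1), f (I.take j) * g (I.drop j)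

/-- The duality pairing `⟨·,·⟩ : NSym_A × QSym_A → ℚ`, determined by
`⟨H_I, M_J⟩ = δ_{I,J}`: the `M_I`-coefficient of a quasisymmetric function is its
coefficient on the monomial `x_{w_1,1} x_{w_2,2} ⋯ x_{w_k,k}`. -/
noncomputable def pairNQ (G : NSymA A) (F : QSymA A) : ℚ :=
  ∑ᶠ I ∈ {I : Sentence A | IsSentence I}, G I * F (I, List.range' 1 I.length)

/-- All ways of splitting each word of a list of words into a prefix and a suffix. -/
def splitsOf : List (List A) → List (List (List A) × List (List A))
  | [] => [([], [])]
  | w :: ws =>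
      (((splitsOf ws).map (fun p =>
        (List.range (w.length + 1)).map (fun t => (w.take t :: p.1, w.drop t :: p.2))))).flatten

/-- Restriction of a candidate monomial: keep only the nonempty words together with
their indices. -/
def restrictMono (ws : List (List A)) (js : List ℕ) : Mono A :=
  let ps := (ws.zip js).filter (fun p => !p.1.isEmpty)
  (ps.map Prod.fst, ps.map Prod.snd)

/-- The product of colored quasisymmetric series: the coefficient of a monomial in `F·G`
is the sum, over all ways of writing each of its words as a concatenation of a word of a
monomial of `F` (on the left) and a word of a monomial of `G` (on the right), of the
products of the corresponding coefficients. -/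
def mulQ (F G : QSymA A) : QSymA A := fun m =>
  ((splitsOf m.1).map (fun p => F (restrictMono p.1 m.2) * G (restrictMono p.2 m.2))).sum

/-- The right perp operator `M^⊸` of `M ∈ QSym_A`, the linear operator on `NSym_A`
determined by `⟨M^⊸(H), G⟩ = ⟨H, G·M⟩`; explicitly, for the dual bases `{M_I}` and `{H_I}`,
`M^⊸(H) = Σ_I ⟨H, M_I · M⟩ H_I`. -/
noncomputable def rperp (M : QSymA A) (H : NSymA A) : NSymA A :=
  ∑ᶠ I ∈ {I : Sentence A | IsSentence I}, pairNQ H (mulQ (MQ I) M) • Hd I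

/-- The colored noncommutative Bernstein operator
`𝔹_v = Σ_u Σ_{Q : w(Q^r) = u} (-1)^{ℓ(Q)} H_{v·u} · (Σ_{S ⪰ Q} M_S^⊸)`,
where `Q` runs over all sentences, `u = w(Q^r)` is the concatenation of the words of `Q`
in reverse order, and `S` runs over all coarsenings of `Q`. -/
noncomputable def Bern (v : List A) (f : NSymA A) : NSymA A :=
  ∑ᶠ Q ∈ {Q : Sentence A | IsSentence Q},
    ((-1 : ℚ)) ^ Q.length •
      mulN (Hw (v ++ Q.reverse.flatten))
        (∑ᶠ S ∈ {S : Sentence A | Refines Q S}, rperp (MQ S) f)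

/-- The colored immaculate function `𝔖_J = 𝔹_{v_1} 𝔹_{v_2} ⋯ 𝔹_{v_h}(1)`. -/
noncomputable def ImmS (J : Sentence A) : NSymA A := J.foldr Bern (Hd [])

/-- The colored ribbon function `R_I = Σ_{J ⪰ I} (-1)^{ℓ(J) - ℓ(I)} H_J`. -/
noncomputable def Rib (I : Sentence A) : NSymA A :=
  ∑ᶠ J ∈ {J : Sentence A | Refines I J}, ((-1 : ℚ)) ^ (I.length - J.length) • Hd J

/-- The Pieri relation `J ⊂_w K` for a sentence `J = (v_1, …, v_h)` and a word `w`: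
`K = (u_1, …, u_g)` with `h ≤ g ≤ h+1` (setting `v_{h+1} = ∅`) and `u_j = v_j · q_j`
for words `q_j` (possibly empty) whose reversed concatenation `q_g ⋯ q_1` equals `w`. -/
def PieriRel (J : Sentence A) (w : List A) (K : Sentence A) : Prop :=
  J.length ≤ K.length ∧ K.length ≤ J.length + 1 ∧
  ∃ q : List (List A), q.length = K.length ∧ q.reverse.flatten = w ∧
    ∀ j < K.length, K.getD j [] = J.getD j [] ++ q.getD j []

/-- Right containment of a weak sentence `K` in `J`: same length, and each word of `K` is a
suffix of the corresponding word of `J`. -/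
def RightContained (K J : Sentence A) : Prop :=
  K.length = J.length ∧ ∀ i < J.length, (K.getD i []).IsSuffix (J.getD i [])

/-- The weak sentence `J/_R K`: remove each word of `K` from the right end of the
corresponding word of `J`. -/
def rightQuot (J K : Sentence A) : Sentence A :=
  List.zipWith (fun v u => v.take (v.length - u.length)) J K

/-- Left containment `J ⊆_L I`: `ℓ(J) ≤ ℓ(I)` and each word of `J` is a prefix of the
corresponding word of `I`. -/
def LeftContained (J I : Sentence A) : Prop :=
  J.length ≤ I.length ∧ ∀ i < J.length, (J.getD i []).IsPrefix (I.getD i [])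

/-- A skew colored immaculate tableau of shape `I/J`: a filling of the active boxes
(the `i`-th row keeps the last `|w_i| - |v_i|` boxes) with positive integers, rows weakly
increasing left to right, and the entries in the (active part of the) first column of `I`
strictly increasing top to bottom. -/
def IsSkewCIT (I J : Sentence A) (f : Filling) : Prop :=
  f.map List.length =
    (List.range I.length).map (fun i => (I.getD i []).length - (J.getD i []).length) ∧
  (∀ row ∈ f, row.Chain' (· ≤ ·)) ∧
  ((List.range I.length).filterMap
    (fun i => if (J.getD i []).length = 0 then (f.getD i []).head? else none)).Chain' (· < ·) ∧
  (∀ x ∈ f.flatten, 1 ≤ x)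

/-- The word of the type of a skew tableau at value `v`: the colors of the active boxes with
entry `v`, read left to right, bottom to top. -/
def skewTypeWord (I J : Sentence A) (f : Filling) (v : ℕ) : List A :=
  (((List.range I.length).reverse).map (fun i =>
    rowWith ((I.getD i []).drop (J.getD i []).length) (f.getD i []) v)).flatten

/-- `SkewHasType I J f K` : the skew tableau `f` of shape `I/J` has type `K`. -/
def SkewHasType (I J : Sentence A) (f : Filling) (K : Sentence A) : Prop :=
  ∀ v, 1 ≤ v → skewTypeWord I J f v = K.getD (v - 1) []

/-! ### The complement involution `ψ` and the row-strict functions -/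

/-- The complement `I^c` of a sentence: the unique sentence with the same maximal word
that splits exactly where `I` does not. -/
def complSent (I : Sentence A) : Sentence A :=
  let w := I.flatten
  let n := w.length
  if n = 0 then []
  else
    let splits := (((wl I).scanl (· + ·) 0).drop 1).dropLast
    let csplits := (List.range' 1 (n - 1)).filter (fun i => !(splits.contains i))
    splitByComp w (compOf csplits n)

/-- The `M_I`-coefficient of a colored quasisymmetric function. -/
noncomputable def coeffM (G : QSymA A) (I : Sentence A) : ℚ := G (I, List.range' 1 I.length)

/-- The image of `M_I` under `ψ`, via `M_I = Σ_{J ⪯ I} (-1)^{ℓ(J)-ℓ(I)} F_J` and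
`ψ(F_J) = F_{J^c}`. -/
noncomputable def psiM (I : Sentence A) : QSymA A :=
  ∑ᶠ J ∈ {J : Sentence A | Refines J I}, ((-1 : ℚ)) ^ (J.length - I.length) • FQ (complSent J)

/-- The linear involution `ψ` of `QSym_A`, determined by `ψ(F_I) = F_{I^c}`. -/
noncomputable def psiQ (G : QSymA A) : QSymA A :=
  ∑ᶠ I ∈ {I : Sentence A | IsSentence I}, coeffM G I • psiM I

/-- A colored row-strict immaculate tableau of shape `I`: entries strictly increase left to
right along each row and weakly increase top to bottom down the first column. -/
def IsCRSIT (I : Sentence A) (f : Filling) : Prop :=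
  f.map List.length = I.map List.length ∧
  (∀ row ∈ f, row.Chain' (· < ·)) ∧
  (f.filterMap List.head?).Chain' (· ≤ ·) ∧
  (∀ x ∈ f.flatten, 1 ≤ x)

/-- The word of the type of a row-strict tableau at value `v`: the colors of the boxes with
entry `v`, read left to right, top to bottom. -/
def rsTypeWord (I : Sentence A) (f : Filling) (v : ℕ) : List A :=
  ((I.zip f).map (fun p => rowWith p.1 p.2 v)).flatten

/-- The monomial `x_T` of a colored row-strict immaculate tableau. -/
def rsMonoOf (I : Sentence A) (f : Filling) : Mono A :=
  let vs := ((List.range (maxEntry f)).map (· + 1)).filter (fun v => !(rsTypeWord I f v).isEmpty)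
  (vs.map (rsTypeWord I f), vs)

/-- The colored row-strict dual immaculate function `ℛ𝔖*_J = Σ_T x_T`, summed over all
colored row-strict immaculate tableaux `T` of shape `J`. -/
noncomputable def rsDualImm (J : Sentence A) : QSymA A := fun m =>
  (Set.ncard {f : Filling | IsCRSIT J f ∧ rsMonoOf J f = m} : ℚ)

/-- `α ⪰ β` in the reverse lexicographic order on compositions: at the first index where
they differ, `α` has the *smaller* entry (padding with zeros). -/
def RevLexGE (α β : List ℕ) : Prop :=
  α = β ∨ ∃ i, (∀ j < i, α.getD j 0 = β.getD j 0) ∧ α.getD i 0 < β.getD i 0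

/-! ### Uncolored (ordinary) versions, for `QSym` -/

namespace Uncolored

/-- A composition: a list of positive integers. -/
def IsComposition (α : List ℕ) : Prop := ∀ a ∈ α, 1 ≤ a

/-- `β ⪯ α`: the composition `α` is obtained by summing adjacent parts of `β`. -/
def RefinesC (β α : List ℕ) : Prop :=
  ∃ P : List (List ℕ), (∀ p ∈ P, p ≠ []) ∧ P.flatten = β ∧ P.map List.sum = α

/-- A monomial `x_{i_1}^{a_1} ⋯ x_{i_m}^{a_m}` recorded by its exponents and its
strictly increasing positive indices. -/
abbrev MonoU := List ℕ × List ℕ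

/-- A quasisymmetric "series", recorded by its coefficient function on monomials.
`QSym` is the span of the monomial functions `MU α` inside this space. -/
abbrev QSymU := MonoU → ℚ

/-- Validity of a monomial: matching lengths, strictly increasing positive indices,
positive exponents. -/
def ValidMonoU (m : MonoU) : Prop :=
  m.1.length = m.2.length ∧ m.2.Chain' (· < ·) ∧ (∀ j ∈ m.2, 1 ≤ j) ∧ ∀ a ∈ m.1, 1 ≤ a

open Classical in
/-- The monomial quasisymmetric function `M_α`. -/
noncomputable def MU (α : List ℕ) : QSymU := fun m =>
  if m.1 = α ∧ ValidMonoU m then 1 else 0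

/-- The fundamental quasisymmetric function `F_α = Σ_{β ⪯ α} M_β`. -/
noncomputable def FU (α : List ℕ) : QSymU :=
  ∑ᶠ β ∈ {β : List ℕ | RefinesC β α}, MU β

/-- An immaculate tableau of shape `α`: positive integer entries, rows weakly increasing
left to right, first column strictly increasing top to bottom. -/
def IsIT (α : List ℕ) (f : Filling) : Prop :=
  f.map List.length = α ∧
  (∀ row ∈ f, row.Chain' (· ≤ ·)) ∧
  (f.filterMap List.head?).Chain' (· < ·) ∧
  (∀ x ∈ f.flatten, 1 ≤ x)

/-- The number of boxes of `f` with entry `v`. -/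
def countOf (f : Filling) (v : ℕ) : ℕ := (f.flatten.filter (fun x => x == v)).length

/-- The monomial `x^T` of an immaculate tableau `T` of type `β`:
`x_1^{β_1} ⋯ x_h^{β_h}` (zero exponents skipped). -/
def monoOfU (f : Filling) : MonoU :=
  let vs := ((List.range (maxEntry f)).map (· + 1)).filter (fun v => decide (countOf f v ≠ 0))
  (vs.map (countOf f), vs)

/-- The dual immaculate function `𝔖*_α = Σ_T x^T`, summed over all immaculate tableaux
of shape `α`. -/
noncomputable def dualImmU (α : List ℕ) : QSymU := fun m =>
  (Set.ncard {f : Filling | IsIT α f ∧ monoOfU f = m} : ℚ)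

/-- The descent composition `co(U)` of a standard immaculate tableau. -/
def descComp (f : Filling) : List ℕ :=
  if nBoxes f = 0 then [] else compOf (descList f) (nBoxes f)

/-- `L_{α,β}`: the number of standard immaculate tableaux of shape `α` with descent
composition `β`. -/
noncomputable def LU (α β : List ℕ) : ℕ :=
  Set.ncard {f : Filling | IsIT α f ∧ IsStandardF f ∧ descComp f = β}

/-- Edges of the immaculate descent graph `𝔇^n`. -/
def IsEdgeU (α β : List ℕ) : Prop := β ≠ α ∧ LU α β ≠ 0

/-- Directed paths from `α` to `β` in the immaculate descent graph, recorded by their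
lists of successive vertices; `[α]` is the empty path at `α`. -/
def PathsU (α β : List ℕ) : Set (List (List ℕ)) :=
  {p | p.head? = some α ∧ p.getLast? = some β ∧ p.Chain' IsEdgeU}

/-- The signed weight `(-1)^{ℓ(𝒫)} prod(𝒫)` of a path. -/
noncomputable def pathWeightU (p : List (List ℕ)) : ℚ :=
  ((-1 : ℚ)) ^ (p.length - 1) * ((p.zip p.tail).map (fun e => (LU e.1 e.2 : ℚ))).prod

/-- `L⁻¹_{α,β} = Σ_𝒫 (-1)^{ℓ(𝒫)} prod(𝒫)`, over directed paths from `α` to `β` in `𝔇^n`. -/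
noncomputable def LinvU (α β : List ℕ) : ℚ :=
  ∑ᶠ p ∈ PathsU α β, pathWeightU p

end Uncolored

end ColoredImm


namespace ColoredImm

theorem boxes_eq_flatMap (f : Filling) : boxes f =
    (List.range f.length).flatMap (fun r => (List.range (f.getD r []).length).map (fun j => (r, j))) := by
  rw [boxes, List.flatMap_def]

theorem mem_boxes (f : Filling) (b : ℕ × ℕ) :
    b ∈ boxes f ↔ b.1 < f.length ∧ b.2 < (f.getD b.1 []).length := by
  rw [boxes_eq_flatMap]
  obtain ⟨r, c⟩ := b
  simp only [List.mem_flatMap, List.mem_map, List.mem_range, Prod.mk.injEq]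
  constructor
  · rintro ⟨r', h1, c', h2, rfl, rfl⟩
    exact ⟨h1, h2⟩
  · rintro ⟨h1, h2⟩
    exact ⟨r, h1, c, h2, rfl, rfl⟩

theorem boxes_nodup (f : Filling) : (boxes f).Nodup := by
  rw [boxes, List.nodup_flatten]
  constructor
  · intro l hl
    simp only [List.mem_map, List.mem_range] at hl
    obtain ⟨r, _, rfl⟩ := hl
    exact List.Nodup.map (fun a b h => by simpa using h) List.nodup_range
  · rw [List.pairwise_map]
    refine List.Pairwise.imp ?_ List.nodup_range
    intro a b hab x hx hy
    simp only [List.mem_map] at hx hy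
    obtain ⟨_, _, rfl⟩ := hx
    obtain ⟨_, _, h⟩ := hy
    simp only [Prod.mk.injEq] at h
    exact hab h.1.symm

theorem map_getD_range {α : Type*} (l : List α) (d : α) :
    (List.range l.length).map (fun i => l.getD i d) = l := by
  apply List.ext_getElem
  · simp
  · intro i h1 h2
    simp [List.getElem?_eq_getElem h2]

theorem boxes_map_entry (f : Filling) : (boxes f).map (entryAt f) = f.flatten := by
  rw [boxes, List.map_flatten, List.map_map]
  congr 1
  conv_rhs => rw [← map_getD_range f []]
  apply List.map_congr_left
  intro r _
  simp only [Function.comp, List.map_map]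
  exact map_getD_range (f.getD r []) 0

theorem nBoxes_eq (f : Filling) : nBoxes f = (boxes f).length := by
  rw [nBoxes, ← boxes_map_entry, List.length_map]

theorem len_getD (f : Filling) (r : ℕ) : (f.getD r []).length = (f.map List.length).getD r 0 := by
  simp only [List.getD_eq_getElem?_getD, List.getElem?_map]
  cases f[r]? <;> simp

theorem boxes_congr {f g : Filling} (h : f.map List.length = g.map List.length) :
    boxes f = boxes g := by
  have hl : f.length = g.length := by simpa using congrArg List.length h
  simp only [boxes, len_getD, hl, h]

theorem filling_ext {f g : Filling} (h : f.map List.length = g.map List.length)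
    (he : ∀ b ∈ boxes f, entryAt f b = entryAt g b) : f = g := by
  have hl : f.length = g.length := by simpa using congrArg List.length h
  rw [← map_getD_range f [], ← map_getD_range g [], ← hl]
  apply List.map_congr_left
  intro r hr
  have hll : (f.getD r []).length = (g.getD r []).length := by rw [len_getD, len_getD, h]
  rw [← map_getD_range (f.getD r []) 0, ← map_getD_range (g.getD r []) 0, ← hll]
  apply List.map_congr_left
  intro c hc
  exact he (r, c) ((mem_boxes f _).2 ⟨by simpa using hr, by simpa using hc⟩)

/-- Apply a function to every entry. -/
def mapF (g : ℕ → ℕ) (f : Filling) : Filling := f.map (List.map g)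

theorem mapF_shape (g : ℕ → ℕ) (f : Filling) : (mapF g f).map List.length = f.map List.length := by
  simp [mapF]

theorem entryAt_eq_getElem {f : Filling} {b : ℕ × ℕ} (h1 : b.1 < f.length) (h2 : b.2 < (f[b.1]).length) :
    entryAt f b = f[b.1][b.2] := by
  simp [entryAt, h1, h2]

theorem entryAt_mapF {g : ℕ → ℕ} {f : Filling} {b : ℕ × ℕ} (hb : b ∈ boxes f) :
    entryAt (mapF g f) b = g (entryAt f b) := by
  rw [mem_boxes] at hb
  obtain ⟨h1, h2⟩ := hb
  have h2' : b.2 < (f[b.1]).length := by simpa [h1] using h2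
  rw [entryAt_eq_getElem h1 h2', entryAt_eq_getElem (by simpa [mapF] using h1) (by simpa [mapF] using h2')]
  simp [mapF]

theorem stdFill_shape (f : Filling) : (stdFill f).map List.length = f.map List.length := by
  conv_rhs => rw [← map_getD_range f []]
  simp [stdFill]

theorem entryAt_stdFill {f : Filling} {b : ℕ × ℕ} (hb : b ∈ boxes f) :
    entryAt (stdFill f) b = 1 + ((boxes f).filter (fun b' => beforeB f b' b)).length := by
  rw [mem_boxes] at hb
  obtain ⟨h1, h2⟩ := hb
  rw [entryAt_eq_getElem (by simpa [stdFill] using h1) (by simpa [stdFill, h1] using h2)]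
  simp [stdFill]

variable {A : Type*}

theorem cit_iff {J : Sentence A} (hJ : IsSentence J) (f : Filling) : IsCIT J f ↔
    f.map List.length = J.map List.length ∧
    (∀ r c c', c < c' → (r, c') ∈ boxes f → entryAt f (r, c) ≤ entryAt f (r, c')) ∧
    (∀ r r', r < r' → r' < f.length → entryAt f (r, 0) < entryAt f (r', 0)) ∧
    (∀ b ∈ boxes f, 1 ≤ entryAt f b) := by
  unfold IsCIT
  refine and_congr_right fun hs => ?_
  have hne : ∀ row ∈ f, row ≠ [] := by
    intro row hrow he
    have : row.length ∈ f.map List.length := List.mem_map_of_mem hrow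
    rw [hs, List.mem_map] at this
    obtain ⟨w, hw, h⟩ := this
    apply hJ w hw
    rw [he] at h
    exact List.length_eq_zero_iff.1 h
  refine and_congr ?_ (and_congr ?_ ?_)
  · constructor
    · intro h r c c' hc hb
      rw [mem_boxes] at hb
      obtain ⟨h1, h2⟩ := hb
      simp only [] at h1 h2
      have h2' : c' < (f[r]).length := by simpa [h1] using h2
      have := h f[r] (List.getElem_mem _)
      rw [List.Chain', List.isChain_iff_pairwise, List.pairwise_iff_getElem] at this
      rw [entryAt_eq_getElem (b := (r, c)) h1 (hc.trans h2'), entryAt_eq_getElem (b := (r, c')) h1 h2']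
      exact this c c' _ _ hc
    · intro h row hrow
      obtain ⟨r, hr, rfl⟩ := List.getElem_of_mem hrow
      rw [List.Chain', List.isChain_iff_getElem]
      intro c hc
      have := h r c (c+1) (by omega) (by rw [mem_boxes]; simpa [hr] using hc)
      rwa [entryAt_eq_getElem (b := (r, c)) hr (by simp; omega), entryAt_eq_getElem (b := (r, c+1)) hr hc] at this
  · have : f.filterMap List.head? = (List.range f.length).map (fun r => entryAt f (r, 0)) := by
      have h2 : f.filterMap List.head? = f.map (fun row => row.getD 0 0) := by
        clear hs
        induction f with
        | nil => simp
        | cons a t ih =>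
          have ha := hne a (by simp)
          cases a with
          | nil => exact absurd rfl ha
          | cons x a =>
            simp only [List.filterMap_cons, List.head?_cons, List.map_cons]
            rw [ih (fun row hrow => hne row (by simp [hrow]))]
            simp
      rw [h2]
      conv_lhs => rw [← map_getD_range f []]
      rw [List.map_map]
      rfl
    rw [this, List.Chain', List.isChain_iff_pairwise, List.pairwise_map, List.pairwise_iff_getElem]
    constructor
    · intro h r r' hr hr'
      have := h r r' (by rw [List.length_range]; omega) (by rw [List.length_range]; omega) hr
      rwa [List.getElem_range, List.getElem_range] at this
    · intro h i j hi hj hij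
      simpa using h i j hij (by simpa using hj)
  · rw [← boxes_map_entry, List.forall_mem_map]

end ColoredImm

namespace ColoredImm
variable {A : Type*}

theorem std_inj {U : Filling} (hU : IsStandardF U) {b b' : ℕ × ℕ} (hb : b ∈ boxes U) (hb' : b' ∈ boxes U)
    (h : entryAt U b = entryAt U b') : b = b' := by
  have hn : ((boxes U).map (entryAt U)).Nodup := by
    rw [boxes_map_entry]
    exact hU.nodup_iff.2 List.nodup_range'
  exact List.inj_on_of_nodup_map hn hb hb' h

theorem std_mem {U : Filling} (hU : IsStandardF U) (k : ℕ) :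
    (∃ b ∈ boxes U, entryAt U b = k) ↔ 1 ≤ k ∧ k ≤ nBoxes U := by
  have : k ∈ (boxes U).map (entryAt U) ↔ k ∈ List.range' 1 (nBoxes U) := by
    rw [boxes_map_entry]
    exact hU.mem_iff
  rw [List.mem_map, List.mem_range'_1] at this
  rw [this]
  omega

theorem std_range {U : Filling} (hU : IsStandardF U) {b : ℕ × ℕ} (hb : b ∈ boxes U) :
    1 ≤ entryAt U b ∧ entryAt U b ≤ nBoxes U := (std_mem hU _).1 ⟨b, hb, rfl⟩

theorem mem_row {U : Filling} {r k : ℕ} (hr : r < U.length) :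
    k ∈ U[r] ↔ ∃ c, (r, c) ∈ boxes U ∧ entryAt U (r, c) = k := by
  constructor
  · intro h
    obtain ⟨c, hc, h⟩ := List.getElem_of_mem h
    refine ⟨c, ?_, ?_⟩
    · rw [mem_boxes]; simpa [hr] using hc
    · rw [entryAt_eq_getElem (b := (r, c)) hr hc]; exact h
  · rintro ⟨c, hb, h⟩
    rw [mem_boxes] at hb
    have hc : c < (U[r]).length := by simpa [hr] using hb.2
    rw [entryAt_eq_getElem (b := (r, c)) hr hc] at h
    rw [← h]
    exact List.getElem_mem _

theorem rowOf_entry {U : Filling} (hU : IsStandardF U) {b : ℕ × ℕ} (hb : b ∈ boxes U) :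
    rowOf U (entryAt U b) = b.1 := by
  have h1 := ((mem_boxes U b).1 hb).1
  rw [rowOf, List.findIdx_eq h1]
  constructor
  · rw [List.contains_iff_mem, mem_row h1]
    exact ⟨b.2, hb, rfl⟩
  · intro j hj
    rw [Bool.eq_false_iff]
    intro h
    rw [List.contains_iff_mem, mem_row (hj.trans h1)] at h
    obtain ⟨c, hc, h⟩ := h
    have := std_inj hU hc hb h
    rw [← this] at hj
    exact lt_irrefl _ hj

theorem colorOf_entry [Inhabited A] (J : Sentence A) {U : Filling} (hU : IsStandardF U) {b : ℕ × ℕ} (hb : b ∈ boxes U) :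
    colorOf J U (entryAt U b) = (J.getD b.1 []).getD b.2 default := by
  rw [colorOf, rowOf_entry hU hb]
  congr 1
  have h := (mem_boxes U b).1 hb
  rw [List.findIdx_eq h.2]
  have h2 : ∀ c (hc : c < (U.getD b.1 []).length), (U.getD b.1 [])[c] = entryAt U (b.1, c) := by
    intro c hc
    simp only [entryAt]
    rw [List.getD_eq_getElem _ _ hc]
  constructor
  · rw [h2]; simp
  · intro c hc
    rw [h2 c (hc.trans h.2), beq_eq_false_iff_ne]
    intro he
    have := std_inj hU ((mem_boxes U (b.1, c)).2 ⟨h.1, hc.trans h.2⟩) hb he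
    rw [← this] at hc
    exact lt_irrefl _ hc

/-- The value assigned to the standard entry `k` by the list of values `H`. -/
def gH (H : List ℕ) (k : ℕ) : ℕ := H.getD (k - 1) 0

/-- Compatibility of a value list with a standard filling. -/
def Compat (U : Filling) (H : List ℕ) : Prop :=
  H.length = nBoxes U ∧ H.Pairwise (· ≤ ·) ∧
  ∀ d, 1 ≤ d → d < nBoxes U → rowOf U d < rowOf U (d + 1) → gH H d < gH H (d + 1)

theorem gH_mono {H : List ℕ} (h : H.Pairwise (· ≤ ·)) {k l : ℕ} (hk : 1 ≤ k) (hkl : k ≤ l) (hl : l ≤ H.length) :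
    gH H k ≤ gH H l := by
  rcases hkl.eq_or_lt with rfl | hlt
  · exact le_rfl
  · rw [gH, gH, List.getD_eq_getElem _ _ (by omega : k - 1 < H.length),
      List.getD_eq_getElem _ _ (by omega : l - 1 < H.length)]
    exact List.pairwise_iff_getElem.1 h _ _ _ _ (by omega)

theorem compat_row {U : Filling} {H : List ℕ} (hc : Compat U H) {k l : ℕ} (hk : 1 ≤ k) (hkl : k ≤ l)
    (hl : l ≤ nBoxes U) (h : gH H k = gH H l) : rowOf U l ≤ rowOf U k := by
  induction l, hkl using Nat.le_induction with
  | base => exact le_rfl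
  | succ l hkl ih =>
    have h1 := gH_mono hc.2.1 hk hkl (by rw [hc.1]; omega)
    have h2 := gH_mono hc.2.1 (hk.trans hkl) (show l ≤ l + 1 by omega) (by rw [hc.1]; omega)
    have h3 := ih (by omega) (by omega)
    by_contra hcon
    have := hc.2.2 l (by omega) (by omega) (by omega)
    omega

theorem compat_key {U : Filling} {H : List ℕ} (hU : IsStandardF U) (hc : Compat U H) {b b' : ℕ × ℕ}
    (hb : b ∈ boxes U) (hb' : b' ∈ boxes U)
    (h : gH H (entryAt U b) = gH H (entryAt U b')) (hr : b.1 < b'.1) : entryAt U b' < entryAt U b := by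
  by_contra hcon
  have := compat_row hc (std_range hU hb).1 (not_lt.1 hcon) (std_range hU hb').2 h
  rw [rowOf_entry hU hb, rowOf_entry hU hb'] at this
  omega

/-- Strict row increase in a standard CIT. -/
theorem std_row_lt {J : Sentence A} (hJ : IsSentence J) {U : Filling} (hU : IsStandardF U) (hC : IsCIT J U)
    {r c c' : ℕ} (hcc : c < c') (hb : (r, c') ∈ boxes U) : entryAt U (r, c) < entryAt U (r, c') := by
  refine lt_of_le_of_ne (((cit_iff hJ U).1 hC).2.1 r c c' hcc hb) ?_
  intro h
  have hb2 : (r, c) ∈ boxes U := by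
    rw [mem_boxes] at hb ⊢
    exact ⟨hb.1, lt_trans hcc hb.2⟩
  have := std_inj hU hb2 hb h
  simp at this
  omega

theorem before_iff {J : Sentence A} (hJ : IsSentence J) {U : Filling} {H : List ℕ} (hU : IsStandardF U)
    (hC : IsCIT J U) (hc : Compat U H) {b b' : ℕ × ℕ} (hb : b ∈ boxes U) (hb' : b' ∈ boxes U) :
    beforeB (mapF (gH H) U) b b' = true ↔ entryAt U b < entryAt U b' := by
  have fwd : ∀ {b b' : ℕ × ℕ}, b ∈ boxes U → b' ∈ boxes U → 
      beforeB (mapF (gH H) U) b b' = true → entryAt U b < entryAt U b' := by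
    intro b b' hb hb' h
    simp only [beforeB, entryAt_mapF hb, entryAt_mapF hb', Bool.or_eq_true, Bool.and_eq_true, decide_eq_true_eq,
      beq_iff_eq] at h
    rcases h with h | ⟨h, h2 | ⟨h2, h3⟩⟩
    · by_contra hcon
      have := gH_mono hc.2.1 (std_range hU hb').1 (not_lt.1 hcon) (by rw [hc.1]; exact (std_range hU hb).2)
      omega
    · exact compat_key hU hc hb' hb h.symm h2
    · obtain ⟨r, c⟩ := b
      obtain ⟨r', c'⟩ := b'
      simp only at h2 h3
      subst h2
      exact std_row_lt hJ hU hC h3 hb'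
  refine ⟨fwd hb hb', ?_⟩
  intro h
  by_contra hcon
  have : beforeB (mapF (gH H) U) b' b = true := by
    have hne : b ≠ b' := by rintro rfl; exact lt_irrefl _ h
    obtain ⟨r, c⟩ := b
    obtain ⟨r', c'⟩ := b'
    have : ¬ (r = r' ∧ c = c') := by simpa using hne
    simp only [beforeB, Bool.or_eq_true, Bool.and_eq_true, decide_eq_true_eq,
      beq_iff_eq] at hcon ⊢
    omega
  have := fwd hb' hb this
  omega

/-- The standardization of `g(U)` is `U`. -/
theorem stdFill_mapF {J : Sentence A} (hJ : IsSentence J) {U : Filling} {H : List ℕ} (hU : IsStandardF U)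
    (hC : IsCIT J U) (hc : Compat U H) : stdFill (mapF (gH H) U) = U := by
  have hs : (stdFill (mapF (gH H) U)).map List.length = U.map List.length := by
    rw [stdFill_shape, mapF_shape]
  apply filling_ext hs
  intro b hb
  rw [boxes_congr hs] at hb
  have hbx : boxes (mapF (gH H) U) = boxes U := boxes_congr (mapF_shape _ _)
  rw [entryAt_stdFill (by rwa [hbx]), hbx]
  have h1 : (boxes U).filter (fun b' => beforeB (mapF (gH H) U) b' b) =
      (boxes U).filter ((fun k => decide (k < entryAt U b)) ∘ entryAt U) := by
    apply List.filter_congr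
    intro b' hb'
    rw [Bool.eq_iff_iff, before_iff hJ hU hC hc hb' hb]
    simp
  have h2 : ((boxes U).filter ((fun k => decide (k < entryAt U b)) ∘ entryAt U)).length =
      ((List.range' 1 (nBoxes U)).filter (fun k => decide (k < entryAt U b))).length := by
    rw [← List.length_map (entryAt U), ← List.filter_map, boxes_map_entry]
    exact (List.Perm.filter _ hU).length_eq
  have h3 : ∀ n e, 1 ≤ e → e ≤ n → ((List.range' 1 n).filter (fun k => decide (k < e))).length = e - 1 := by
    intro n e he hen
    have : List.range' 1 n = List.range' 1 (e-1) ++ List.range' e (n - (e-1)) := by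
      have := List.range'_append (s := 1) (m := e-1) (n := n - (e-1)) (step := 1)
      rw [show 1 + 1 * (e-1) = e by omega, show (e-1) + (n - (e-1)) = n by omega] at this
      exact this.symm
    rw [this, List.filter_append, List.filter_eq_self.2, List.filter_eq_nil_iff.2]
    · simp
    · intro a ha
      rw [List.mem_range'_1] at ha
      simp; omega
    · intro a ha
      rw [List.mem_range'_1] at ha
      simp; omega
  rw [h1, h2, h3 _ _ (std_range hU hb).1 (std_range hU hb).2]
  have := (std_range hU hb).1
  omega

/-- `g(U)` is a CIT. -/
theorem mapF_cit {J : Sentence A} (hJ : IsSentence J) {U : Filling} {H : List ℕ} (hU : IsStandardF U)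
    (hC : IsCIT J U) (hc : Compat U H) (hpos : ∀ x ∈ H, 1 ≤ x) : IsCIT J (mapF (gH H) U) := by
  rw [cit_iff hJ] at hC ⊢
  have hbx : boxes (mapF (gH H) U) = boxes U := boxes_congr (mapF_shape _ _)
  have hlen : (mapF (gH H) U).length = U.length := by simp [mapF]
  obtain ⟨h1, h2, h3, h4⟩ := hC
  have hrow : ∀ r < U.length, (r, 0) ∈ boxes U := by
    intro r hr
    rw [mem_boxes]
    refine ⟨hr, ?_⟩
    show 0 < _
    rw [len_getD, h1]
    have hr2 : r < J.length := by
      have := congrArg List.length h1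
      simp at this; omega
    have : J[r] ≠ [] := hJ _ (List.getElem_mem _)
    simpa [hr2, List.length_pos_iff] using this
  refine ⟨by rw [mapF_shape, h1], ?_, ?_, ?_⟩
  · intro r c c' hcc hb
    rw [hbx] at hb
    have hb2 : (r, c) ∈ boxes U := by
      rw [mem_boxes] at hb ⊢
      exact ⟨hb.1, lt_trans hcc hb.2⟩
    rw [entryAt_mapF hb, entryAt_mapF hb2]
    exact gH_mono hc.2.1 (std_range hU hb2).1 (h2 r c c' hcc hb) (by rw [hc.1]; exact (std_range hU hb).2)
  · intro r r' hr hr'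
    rw [hlen] at hr'
    have hb := hrow r (by omega)
    have hb' := hrow r' hr'
    rw [entryAt_mapF hb, entryAt_mapF hb']
    have := h3 r r' hr hr'
    refine lt_of_le_of_ne (gH_mono hc.2.1 (std_range hU hb).1 this.le (by rw [hc.1]; exact (std_range hU hb').2)) ?_
    intro he
    have := compat_key hU hc hb hb' he hr
    omega
  · intro b hb
    rw [hbx] at hb
    rw [entryAt_mapF hb, gH]
    have := std_range hU hb
    rw [List.getD_eq_getElem _ _ (by rw [hc.1]; omega)]
    exact hpos _ (List.getElem_mem _)

end ColoredImm

namespace ColoredImm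
variable {A : Type*}

/-- Boxes read from the bottom row up to the top row. -/
def rboxes (f : Filling) : List (ℕ × ℕ) :=
  ((List.range f.length).reverse.map
    (fun r => (List.range (f.getD r []).length).map (fun j => (r, j)))).flatten

theorem rboxes_perm (f : Filling) : (rboxes f).Perm (boxes f) := by
  unfold rboxes boxes
  exact List.Perm.flatten ((List.reverse_perm _).map _)

theorem rowWith_eq [Inhabited A] (w : List A) (row : List ℕ) (h : w.length = row.length) (v : ℕ) :
    rowWith w row v = ((List.range row.length).filter (fun c => row.getD c 0 == v)).map (fun c => w.getD c default) := by
  have hz : w.zip row = (List.range row.length).map (fun c => (w.getD c default, row.getD c 0)) := by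
    apply List.ext_getElem
    · simp [h]
    · intro i h1 h2
      simp at h1
      simp [h1.1, h1.2]
  rw [rowWith, hz, List.filter_map, List.map_map]
  rfl

theorem typeWord_eq [Inhabited A] {J : Sentence A} {f : Filling} (hs : f.map List.length = J.map List.length) (v : ℕ) :
    typeWord J f v = ((rboxes f).filter (fun b => entryAt f b == v)).map
      (fun b => (J.getD b.1 []).getD b.2 default) := by
  have hl : f.length = J.length := by simpa using congrArg List.length hs
  have hz : J.zip f = (List.range f.length).map (fun r => (J.getD r [], f.getD r [])) := by
    apply List.ext_getElem
    · simp [hl]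
    · intro i h1 h2
      simp at h1
      simp [h1.1, h1.2]
  rw [typeWord, hz, ← List.map_reverse, List.map_map, rboxes, List.filter_flatten, List.map_flatten,
    List.map_map, List.map_map]
  congr 1
  apply List.map_congr_left
  intro r hr
  simp only [List.mem_reverse, List.mem_range] at hr
  have hll : (J.getD r []).length = (f.getD r []).length := by
    have h1 : (J.getD r []).length = (J.map List.length).getD r 0 := by
      simp only [List.getD_eq_getElem?_getD, List.getElem?_map]
      cases J[r]? <;> simp
    rw [h1, len_getD, hs]
  simp only [Function.comp_apply]
  rw [rowWith_eq _ _ hll, List.filter_map, List.map_map]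
  rfl

theorem typeWord_mapF [Inhabited A] {J : Sentence A} (hJ : IsSentence J) {U : Filling} {H : List ℕ} (hU : IsStandardF U)
    (hC : IsCIT J U) (hc : Compat U H) (v : ℕ) :
    typeWord J (mapF (gH H) U) v = rowWith (readWord J U) H v := by
  have hbx : boxes (mapF (gH H) U) = boxes U := boxes_congr (mapF_shape _ _)
  have hrbx : rboxes (mapF (gH H) U) = rboxes U := by
    unfold rboxes
    simp only [len_getD, mapF_shape]
    simp [mapF]
  rw [typeWord_eq (by rw [mapF_shape]; exact hC.1), hrbx]
  have hmem : ∀ b, b ∈ rboxes U ↔ b ∈ boxes U := fun b => (rboxes_perm U).mem_iff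
  have e1 : (rboxes U).filter (fun b => entryAt (mapF (gH H) U) b == v) =
      (rboxes U).filter ((fun k => gH H k == v) ∘ entryAt U) := by
    apply List.filter_congr
    intro b hb
    rw [entryAt_mapF ((hmem b).1 hb)]
    rfl
  rw [e1]
  have e2 : ((rboxes U).filter ((fun k => gH H k == v) ∘ entryAt U)).map
      (fun b => (J.getD b.1 []).getD b.2 default) =
      (((rboxes U).filter ((fun k => gH H k == v) ∘ entryAt U)).map (entryAt U)).map (colorOf J U) := by
    rw [List.map_map]
    apply List.map_congr_left
    intro b hb
    rw [List.mem_filter, hmem] at hb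
    rw [Function.comp_apply, colorOf_entry J hU hb.1]
  rw [e2]
  have e3 : ((rboxes U).filter ((fun k => gH H k == v) ∘ entryAt U)).map (entryAt U) =
      (List.range' 1 (nBoxes U)).filter (fun k => gH H k == v) := by
    apply List.Perm.eq_of_pairwise (le := (· < ·))
    · intro a b _ _ h1 h2; omega
    · rw [List.pairwise_map, List.pairwise_filter, rboxes, List.pairwise_flatten]
      constructor
      · intro l hl
        simp only [List.mem_map, List.mem_reverse, List.mem_range] at hl
        obtain ⟨r, hr, rfl⟩ := hl
        rw [List.pairwise_map]
        refine List.Pairwise.imp_of_mem ?_ (List.pairwise_lt_range)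
        intro c c' h1 h2 hcc _ _
        exact std_row_lt hJ hU hC hcc ((mem_boxes _ _).2 ⟨hr, by simpa using h2⟩)
      · rw [List.pairwise_map, List.pairwise_reverse]
        refine List.Pairwise.imp_of_mem ?_ (List.pairwise_lt_range)
        intro r r' h1 h2 hrr x hx y hy hxv hyv
        simp only [List.mem_map, List.mem_range] at hx hy h1 h2
        obtain ⟨c', hc', rfl⟩ := hx
        obtain ⟨c, hc2, rfl⟩ := hy
        simp only [Function.comp_apply, beq_iff_eq] at hxv hyv
        exact compat_key hU hc ((mem_boxes U (r, c)).2 ⟨h1, hc2⟩) ((mem_boxes U (r', c')).2 ⟨h2, hc'⟩)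
          (hyv.trans hxv.symm) hrr
    · exact List.Pairwise.filter _ (List.pairwise_lt_range')
    · rw [← List.filter_map]
      apply List.Perm.filter
      refine ((rboxes_perm U).map _).trans ?_
      rw [boxes_map_entry]
      exact hU
  rw [e3, rowWith_eq _ _ (by rw [hc.1]; simp [readWord]), hc.1, List.range'_eq_map_range, List.filter_map,
    List.map_map]
  have e4 : (List.range (nBoxes U)).filter ((fun k => gH H k == v) ∘ fun x => 1 + x) =
      (List.range (nBoxes U)).filter (fun c => H.getD c 0 == v) := by
    apply List.filter_congr
    intro c _
    simp [gH]
  rw [e4]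
  apply List.map_congr_left
  intro c hc'
  rw [List.mem_filter, List.mem_range] at hc'
  simp only [Function.comp_apply]
  rw [List.getD_eq_getElem _ _ (by simp [readWord]; exact hc'.1)]
  simp [readWord, Nat.add_comm]

end ColoredImm

namespace ColoredImm
variable {A : Type*}

theorem filter_length_lt {α : Type*} {l : List α} {p q : α → Bool} (h : ∀ x, p x = true → q x = true)
    {a : α} (ha : a ∈ l) (hq : q a = true) (hp : ¬ p a = true) : (l.filter p).length < (l.filter q).length := by
  have hs : (l.filter p).Sublist (l.filter q) := List.monotone_filter_right l h
  refine lt_of_le_of_ne hs.length_le ?_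
  intro he
  have := hs.eq_of_length he
  have h2 : a ∈ l.filter q := List.mem_filter.2 ⟨ha, hq⟩
  rw [← this, List.mem_filter] at h2
  exact hp h2.2

theorem before_def (f : Filling) (b b' : ℕ × ℕ) : beforeB f b b' = true ↔
    (entryAt f b < entryAt f b' ∨ (entryAt f b = entryAt f b' ∧ (b'.1 < b.1 ∨ (b.1 = b'.1 ∧ b.2 < b'.2)))) := by
  simp only [beforeB, Bool.or_eq_true, Bool.and_eq_true, decide_eq_true_eq, beq_iff_eq]

theorem std_lt_of_before {f : Filling} {b b' : ℕ × ℕ} (hb : b ∈ boxes f) (hb' : b' ∈ boxes f)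
    (h : beforeB f b b' = true) : entryAt (stdFill f) b < entryAt (stdFill f) b' := by
  rw [entryAt_stdFill hb, entryAt_stdFill hb']
  apply Nat.add_lt_add_left
  refine filter_length_lt ?_ hb h ?_
  · intro x hx
    rw [before_def] at *
    omega
  · rw [before_def]
    omega

theorem std_lt_iff {f : Filling} {b b' : ℕ × ℕ} (hb : b ∈ boxes f) (hb' : b' ∈ boxes f) :
    entryAt (stdFill f) b < entryAt (stdFill f) b' ↔ beforeB f b b' = true := by
  refine ⟨fun h => ?_, std_lt_of_before hb hb'⟩
  by_contra hcon
  have hne : b ≠ b' := by rintro rfl; exact lt_irrefl _ h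
  have : beforeB f b' b = true := by
    obtain ⟨r, c⟩ := b
    obtain ⟨r', c'⟩ := b'
    have : ¬ (r = r' ∧ c = c') := by simpa using hne
    rw [before_def] at *
    simp only at *
    omega
  have := std_lt_of_before hb' hb this
  omega

theorem stdFill_inj {f : Filling} {b b' : ℕ × ℕ} (hb : b ∈ boxes f) (hb' : b' ∈ boxes f)
    (h : entryAt (stdFill f) b = entryAt (stdFill f) b') : b = b' := by
  have h1 := mt (std_lt_of_before hb hb') (by omega)
  have h2 := mt (std_lt_of_before hb' hb) (by omega)
  rw [before_def] at h1 h2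
  apply Prod.ext <;> omega

theorem boxes_stdFill (f : Filling) : boxes (stdFill f) = boxes f := boxes_congr (stdFill_shape f)

theorem stdFill_standard (f : Filling) : IsStandardF (stdFill f) := by
  unfold IsStandardF
  have hn : nBoxes (stdFill f) = (boxes f).length := by rw [nBoxes_eq, boxes_stdFill]
  rw [hn, ← boxes_map_entry, boxes_stdFill]
  apply List.Subperm.perm_of_length_le
  · apply List.subperm_of_subset
    · exact List.Nodup.map_on (fun x hx y hy h => stdFill_inj hx hy h) (boxes_nodup f)
    · intro k hk
      rw [List.mem_map] at hk
      obtain ⟨b, hb, rfl⟩ := hk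
      rw [List.mem_range'_1, entryAt_stdFill hb]
      have : ((boxes f).filter (fun b' => beforeB f b' b)).length < ((boxes f).filter (fun _ => true)).length :=
        filter_length_lt (by simp) hb rfl (by rw [before_def]; omega)
      rw [List.filter_true] at this
      omega
  · simp

theorem row_box {J : Sentence A} (hJ : IsSentence J) {f : Filling} (hs : f.map List.length = J.map List.length)
    {r : ℕ} (hr : r < f.length) : (r, 0) ∈ boxes f := by
  rw [mem_boxes]
  refine ⟨hr, ?_⟩
  show 0 < _
  rw [len_getD, hs]
  have hr2 : r < J.length := by
    have := congrArg List.length hs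
    simp at this; omega
  have : J[r] ≠ [] := hJ _ (List.getElem_mem _)
  simpa [hr2, List.length_pos_iff] using this

theorem stdFill_cit {J : Sentence A} (hJ : IsSentence J) {T : Filling} (hT : IsCIT J T) : IsCIT J (stdFill T) := by
  rw [cit_iff hJ] at hT ⊢
  obtain ⟨h1, h2, h3, h4⟩ := hT
  refine ⟨by rw [stdFill_shape, h1], ?_, ?_, ?_⟩
  · intro r c c' hcc hb
    rw [boxes_stdFill] at hb
    have hb2 : (r, c) ∈ boxes T := by
      rw [mem_boxes] at hb ⊢
      exact ⟨hb.1, lt_trans hcc hb.2⟩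
    apply le_of_lt
    rw [std_lt_iff hb2 hb, before_def]
    rcases (h2 r c c' hcc hb).lt_or_eq with h | h
    · exact Or.inl h
    · exact Or.inr ⟨h, Or.inr ⟨rfl, hcc⟩⟩
  · intro r r' hr hr'
    have hr'' : r' < T.length := by simpa [stdFill] using hr'
    rw [std_lt_iff (row_box hJ h1 (by omega)) (row_box hJ h1 hr''), before_def]
    exact Or.inl (h3 r r' hr hr'')
  · intro b hb
    rw [boxes_stdFill] at hb
    rw [entryAt_stdFill hb]
    omega

theorem exists_compat {J : Sentence A} (hJ : IsSentence J) {T : Filling} (hT : IsCIT J T) :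
    ∃ H, Compat (stdFill T) H ∧ (∀ x ∈ H, 1 ≤ x) ∧ T = mapF (gH H) (stdFill T) := by
  have hU := stdFill_standard T
  set U := stdFill T with hUd
  have hbx : boxes U = boxes T := boxes_stdFill T
  have hpos := ((cit_iff hJ T).1 hT).2.2.2
  have hex : ∀ k, ∃ b, 1 ≤ k → k ≤ nBoxes U → b ∈ boxes T ∧ entryAt U b = k := by
    intro k
    by_cases hk : 1 ≤ k ∧ k ≤ nBoxes U
    · obtain ⟨b, hb, h⟩ := (std_mem hU k).2 hk
      exact ⟨b, fun _ _ => ⟨hbx ▸ hb, h⟩⟩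
    · exact ⟨(0,0), fun h1 h2 => absurd ⟨h1, h2⟩ hk⟩
  choose β hβ using hex
  let H := (List.range (nBoxes U)).map (fun i => entryAt T (β (i+1)))
  have hH : H.length = nBoxes U := by simp [H]
  have hg : ∀ k, 1 ≤ k → k ≤ nBoxes U → gH H k = entryAt T (β k) := by
    intro k h1 h2
    rw [gH, List.getD_eq_getElem _ _ (by rw [hH]; omega)]
    simp only [H, List.getElem_map, List.getElem_range]
    rw [Nat.sub_add_cancel h1]
  have hle : ∀ k l, 1 ≤ k → k < l → l ≤ nBoxes U → beforeB T (β k) (β l) = true := by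
    intro k l h1 h2 h3
    obtain ⟨a1, a2⟩ := hβ k h1 (by omega)
    obtain ⟨b1, b2⟩ := hβ l (by omega) h3
    rw [← std_lt_iff a1 b1, ← hUd]
    omega
  refine ⟨H, ⟨hH, ?_, ?_⟩, ?_, ?_⟩
  · rw [List.pairwise_map]
    refine List.Pairwise.imp_of_mem ?_ (List.pairwise_lt_range)
    intro i j hi hj hij
    rw [List.mem_range] at hi hj
    have := hle (i+1) (j+1) (by omega) (by omega) (by omega)
    rw [before_def] at this
    omega
  · intro d h1 h2 hr
    rw [hg d h1 h2.le, hg (d+1) (by omega) h2]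
    obtain ⟨a1, a2⟩ := hβ d h1 h2.le
    obtain ⟨b1, b2⟩ := hβ (d+1) (by omega) h2
    have := hle d (d+1) h1 (by omega) h2
    rw [← a2, rowOf_entry hU (hbx ▸ a1), a2, ← b2, rowOf_entry hU (hbx ▸ b1)] at hr
    rw [before_def] at this
    omega
  · intro x hx
    simp only [H, List.mem_map, List.mem_range] at hx
    obtain ⟨i, hi, rfl⟩ := hx
    exact hpos _ (hβ (i+1) (by omega) hi).1
  · apply filling_ext
    · rw [mapF_shape, stdFill_shape]
    · intro b hb
      have hb' : b ∈ boxes U := hbx ▸ hb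
      have hr := std_range hU hb'
      rw [entryAt_mapF hb', hg _ hr.1 hr.2]
      obtain ⟨a1, a2⟩ := hβ _ hr.1 hr.2
      rw [stdFill_inj a1 hb a2]

end ColoredImm

namespace ColoredImm
variable {A : Type*}

/-- The value list of a monomial. -/
def HM : List (List A) → List ℕ → List ℕ
  | w :: ws, j :: js => List.replicate w.length j ++ HM ws js
  | _, _ => []

theorem HM_length {ws : List (List A)} {js : List ℕ} (h : ws.length = js.length) :
    (HM ws js).length = ws.flatten.length := by
  induction ws generalizing js with
  | nil => simp [HM]
  | cons w ws ih =>
    cases js with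
    | nil => simp at h
    | cons j js =>
      rw [HM, List.length_append, ih (by simpa using h)]
      simp

theorem HM_mem {ws : List (List A)} {js : List ℕ} {x : ℕ} (h : x ∈ HM ws js) : x ∈ js := by
  induction ws generalizing js with
  | nil => simp [HM] at h
  | cons w ws ih =>
    cases js with
    | nil => simp [HM] at h
    | cons j js =>
      rw [HM, List.mem_append] at h
      rcases h with h | h
      · rw [List.eq_of_mem_replicate h]; simp
      · exact List.mem_cons_of_mem _ (ih h)

theorem HM_sorted {ws : List (List A)} {js : List ℕ} (h : js.Pairwise (· < ·)) :
    (HM ws js).Pairwise (· ≤ ·) := by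
  induction ws generalizing js with
  | nil => simp [HM]
  | cons w ws ih =>
    cases js with
    | nil => simp [HM]
    | cons j js =>
      rw [List.pairwise_cons] at h
      rw [HM, List.pairwise_append]
      refine ⟨?_, ih h.2, ?_⟩
      · exact List.pairwise_replicate.2 (Or.inr le_rfl)
      · intro a ha b hb
        rw [List.eq_of_mem_replicate ha]
        exact (h.1 b (HM_mem hb)).le

theorem HM_append {p s : List (List A)} {js ks : List ℕ} (h : p.length = js.length) :
    HM (p ++ s) (js ++ ks) = HM p js ++ HM s ks := by
  induction p generalizing js with
  | nil =>
    cases js with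
    | nil => simp [HM]
    | cons j js => simp at h
  | cons w ws ih =>
    cases js with
    | nil => simp at h
    | cons j js =>
      simp only [List.cons_append, HM]
      rw [ih (by simpa using h), List.append_assoc]

theorem rowWith_append {w1 w2 : List A} {h1 h2 : List ℕ} (h : w1.length = h1.length) (v : ℕ) :
    rowWith (w1 ++ w2) (h1 ++ h2) v = rowWith w1 h1 v ++ rowWith w2 h2 v := by
  simp [rowWith, List.zip_append h]

theorem rowWith_replicate (w : List A) (j v : ℕ) :
    rowWith w (List.replicate w.length j) v = if j = v then w else [] := by
  induction w with
  | nil => simp [rowWith]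
  | cons a w ih =>
    have : rowWith (a :: w) (List.replicate (a :: w).length j) v =
      (if j = v then [a] else []) ++ rowWith w (List.replicate w.length j) v := by
      simp only [rowWith, List.length_cons, List.replicate_succ, List.zip_cons_cons, List.filter_cons, beq_iff_eq]
      split <;> simp
    rw [this, ih]
    split <;> simp

theorem rowWith_HM_cons (w : List A) (ws : List (List A)) (j : ℕ) (js : List ℕ) (v : ℕ) :
    rowWith (w :: ws).flatten (HM (w :: ws) (j :: js)) v =
      (if j = v then w else []) ++ rowWith ws.flatten (HM ws js) v := by
  rw [List.flatten_cons, HM, rowWith_append (by simp), rowWith_replicate]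

theorem rowWith_HM_not_mem {ws : List (List A)} {js : List ℕ} {v : ℕ} (hv : v ∉ js) :
    rowWith ws.flatten (HM ws js) v = [] := by
  induction ws generalizing js with
  | nil => simp [HM, rowWith]
  | cons w ws ih =>
    cases js with
    | nil => simp [HM, rowWith]
    | cons j js =>
      simp only [List.mem_cons, not_or] at hv
      rw [rowWith_HM_cons, ih hv.2, if_neg (Ne.symm hv.1)]
      rfl

theorem map_rowWith_HM {ws : List (List A)} {js : List ℕ} (hl : ws.length = js.length)
    (h : js.Pairwise (· < ·)) : js.map (rowWith ws.flatten (HM ws js)) = ws := by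
  induction ws generalizing js with
  | nil =>
    cases js with
    | nil => simp
    | cons j js => simp at hl
  | cons w ws ih =>
    cases js with
    | nil => simp at hl
    | cons j js =>
      rw [List.pairwise_cons] at h
      rw [List.map_cons, rowWith_HM_cons, if_pos rfl, rowWith_HM_not_mem (fun hj => lt_irrefl _ (h.1 j hj)),
        List.append_nil]
      congr 1
      conv_rhs => rw [← ih (by simpa using hl) h.2]
      apply List.map_congr_left
      intro v hv
      rw [rowWith_HM_cons, if_neg (h.1 v hv).ne, List.nil_append]

theorem HM_strict_of_split {p s : List (List A)} {js : List ℕ} (hl : (p ++ s).length = js.length)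
    (h : js.Pairwise (· < ·)) {d : ℕ} (hd : 1 ≤ d) (hdn : d < (p ++ s).flatten.length)
    (hp : p.flatten.length = d) : gH (HM (p ++ s) js) d < gH (HM (p ++ s) js) (d + 1) := by
  have hjs : js = js.take p.length ++ js.drop p.length := (List.take_append_drop _ _).symm
  have hpl : p.length = (js.take p.length).length := by
    rw [List.length_append] at hl
    simp; omega
  rw [hjs] at h ⊢
  set ks := js.take p.length
  set ls := js.drop p.length
  have hls : s.length = ls.length := by
    rw [hjs] at hl; simp only [List.length_append] at hl; omega
  rw [HM_append hpl]
  have hA : (HM p ks).length = d := by rw [HM_length hpl, hp]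
  have hB : (HM s ls).length = s.flatten.length := HM_length hls
  have hs : 0 < s.flatten.length := by
    rw [List.flatten_append, List.length_append] at hdn; omega
  rw [gH, gH, List.getD_eq_getElem _ _ (by rw [List.length_append]; omega),
    List.getD_eq_getElem _ _ (by rw [List.length_append]; omega),
    List.getElem_append_left (by omega), List.getElem_append_right (by omega)]
  exact (List.pairwise_append.1 h).2.2 _ (HM_mem (List.getElem_mem _)) _ (HM_mem (List.getElem_mem _))

theorem split_of_HM_strict {ws : List (List A)} {js : List ℕ} (hl : ws.length = js.length)
    {d : ℕ} (hd : 1 ≤ d) (hdn : d < ws.flatten.length)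
    (hlt : gH (HM ws js) d < gH (HM ws js) (d + 1)) : ∃ p s, ws = p ++ s ∧ p.flatten.length = d := by
  induction ws generalizing js d with
  | nil => simp at hdn
  | cons w ws ih =>
    cases js with
    | nil => simp at hl
    | cons j js =>
      have hl' : ws.length = js.length := by simpa using hl
      have hL := HM_length hl'
      rw [List.flatten_cons, List.length_append] at hdn
      rcases lt_trichotomy d w.length with h | h | h
      · exfalso
        rw [HM, gH, gH, List.getD_eq_getElem _ _ (by simp; omega),
          List.getD_eq_getElem _ _ (by simp; omega), List.getElem_append_left (by simp; omega),
          List.getElem_append_left (by simp; omega)] at hlt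
        simp at hlt
      · exact ⟨[w], ws, rfl, by simp [h]⟩
      · obtain ⟨p, s, h1, h2⟩ := ih hl' (d := d - w.length) (by omega) (by omega) (by
          rw [HM, gH, gH, List.getD_append_right _ _ _ _ (by simp; omega),
            List.getD_append_right _ _ _ _ (by simp; omega)] at hlt
          rw [gH, gH]
          simp only [List.length_replicate] at hlt
          convert hlt using 2 <;> omega)
        refine ⟨w :: p, s, by rw [h1]; rfl, ?_⟩
        rw [List.flatten_cons, List.length_append]
        omega

theorem sorted_split (P : List (A × ℕ)) (v : ℕ) (hP : P.Pairwise (fun x y => x.2 ≤ y.2)) (hv : ∀ x ∈ P, v ≤ x.2) :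
    P.filter (fun p => p.2 == v) ++ P.filter (fun p => !(p.2 == v)) = P := by
  induction P with
  | nil => rfl
  | cons x P ih =>
    rw [List.pairwise_cons] at hP
    by_cases hx : x.2 = v
    · rw [List.filter_cons_of_pos (by simpa using hx), List.filter_cons_of_neg (by simpa using hx),
        List.cons_append, ih hP.2 (fun y hy => hv y (List.mem_cons_of_mem _ hy))]
    · have hlt := lt_of_le_of_ne (hv x (by simp)) (Ne.symm hx)
      rw [List.filter_eq_nil_iff.2, List.filter_eq_self.2]
      · rfl
      · intro a ha
        rcases List.mem_cons.1 ha with rfl | ha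
        · simpa using hx
        · have := hP.1 a ha
          simp; omega
      · intro a ha
        rcases List.mem_cons.1 ha with rfl | ha
        · simpa using hx
        · have := hP.1 a ha
          simp; omega

theorem sorted_flatten (vs : List ℕ) (hvs : vs.Pairwise (· < ·)) (P : List (A × ℕ))
    (hP : P.Pairwise (fun x y => x.2 ≤ y.2)) (hv : ∀ x ∈ P, x.2 ∈ vs) :
    (vs.map (fun v => P.filter (fun p => p.2 == v))).flatten = P := by
  induction vs generalizing P with
  | nil =>
    cases P with
    | nil => rfl
    | cons x P => exact absurd (hv x (by simp)) (by simp)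
  | cons v vs ih =>
    rw [List.pairwise_cons] at hvs
    rw [List.map_cons, List.flatten_cons]
    have hle : ∀ x ∈ P, v ≤ x.2 := by
      intro x hx
      rcases List.mem_cons.1 (hv x hx) with h | h
      · exact h.ge
      · exact (hvs.1 _ h).le
    conv_rhs => rw [← sorted_split P v hP hle]
    congr 1
    rw [← ih hvs.2 (P.filter (fun p => !(p.2 == v))) (hP.filter _)]
    · congr 1
      apply List.map_congr_left
      intro u hu
      rw [List.filter_filter]
      apply List.filter_congr
      intro x _
      have := hvs.1 u hu
      by_cases hx : x.2 = u
      · simp [hx]; omega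
      · simp [hx]
    · intro x hx
      rw [List.mem_filter] at hx
      rcases List.mem_cons.1 (hv x hx.1) with h | h
      · simp [h] at hx
      · exact h

theorem HM_map (vs : List ℕ) (F : ℕ → List A) :
    HM (vs.map F) vs = (vs.map (fun v => List.replicate (F v).length v)).flatten := by
  induction vs with
  | nil => simp [HM]
  | cons v vs ih => rw [List.map_cons, HM, ih]; simp

theorem reconstruct (W : List A) (H : List ℕ) (hl : W.length = H.length) (hH : H.Pairwise (· ≤ ·))
    (vs : List ℕ) (hvs : vs.Pairwise (· < ·)) (hv : ∀ x ∈ H, x ∈ vs) :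
    (vs.map (rowWith W H)).flatten = W ∧ HM (vs.map (rowWith W H)) vs = H := by
  have hfst : (W.zip H).map Prod.fst = W := List.map_fst_zip (by omega)
  have hsnd : (W.zip H).map Prod.snd = H := List.map_snd_zip (by omega)
  have key := sorted_flatten vs hvs (W.zip H) (by rw [← List.pairwise_map, hsnd]; exact hH) (by
    intro x hx
    apply hv
    rw [← hsnd]
    exact List.mem_map_of_mem hx)
  constructor
  · conv_rhs => rw [← hfst, ← key]
    rw [List.map_flatten, List.map_map]
    rfl
  · rw [HM_map]
    conv_rhs => rw [← hsnd, ← key]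
    rw [List.map_flatten, List.map_map]
    congr 1
    apply List.map_congr_left
    intro v _
    symm
    rw [List.eq_replicate_iff]
    constructor
    · simp [rowWith]
    · intro b hb
      simp only [Function.comp_apply, List.mem_map, List.mem_filter] at hb
      obtain ⟨x, hx, rfl⟩ := hb
      simpa using hx.2

end ColoredImm

namespace ColoredImm
variable {A : Type*}

/-- Composition with starting offset. -/
def compFrom (a : ℕ) (ds : List ℕ) (n : ℕ) : List ℕ :=
  List.zipWith (fun a b => b - a) (a :: ds) (ds ++ [n])

theorem compFrom_nil (a n : ℕ) : compFrom a [] n = [n - a] := rfl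

theorem compFrom_cons (a d : ℕ) (ds : List ℕ) (n : ℕ) :
    compFrom a (d :: ds) n = (d - a) :: compFrom d ds n := rfl

theorem refines_cons {ws : Sentence A} {c : List A} {C : Sentence A} :
    Refines ws (c :: C) ↔ ∃ p ws', p ≠ [] ∧ ws = p ++ ws' ∧ p.flatten = c ∧ Refines ws' C := by
  constructor
  · rintro ⟨P, h1, h2, h3⟩
    cases P with
    | nil => simp at h3
    | cons p P =>
      rw [List.map_cons, List.cons.injEq] at h3
      exact ⟨p, P.flatten, h1 p (by simp), by rw [← h2]; rfl, h3.1, P,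
        fun q hq => h1 q (by simp [hq]), rfl, h3.2⟩
  · rintro ⟨p, ws', h1, h2, h3, P, h4, h5, h6⟩
    refine ⟨p :: P, ?_, ?_, ?_⟩
    · intro q hq
      rcases List.mem_cons.1 hq with rfl | hq
      · exact h1
      · exact h4 q hq
    · rw [List.flatten_cons, h5, h2]
    · rw [List.map_cons, h3, h6]

theorem refines_nil {ws : Sentence A} : Refines ws [] ↔ ws = [] := by
  constructor
  · rintro ⟨P, h1, h2, h3⟩
    rw [List.map_eq_nil_iff] at h3
    rw [← h2, h3]; rfl
  · rintro rfl
    exact ⟨[], by simp, rfl, rfl⟩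

theorem refines_flatten {ws C : Sentence A} (h : Refines ws C) : ws.flatten = C.flatten := by
  obtain ⟨P, h1, h2, h3⟩ := h
  rw [← h2, ← h3, List.flatten_flatten]

theorem split_flatten (ds : List ℕ) (a n : ℕ) (W : List A) (hW : W.length = n - a)
    (hds : (a :: ds).Pairwise (· < ·)) (hn : ∀ d ∈ a :: ds, d < n) :
    (splitByComp W (compFrom a ds n)).flatten = W ∧ ∀ w ∈ splitByComp W (compFrom a ds n), w ≠ [] := by
  induction ds generalizing a W with
  | nil =>
    have := hn a (by simp)
    rw [compFrom_nil, splitByComp, splitByComp, ← hW, List.take_length]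
    refine ⟨by simp, ?_⟩
    intro w hw
    rw [List.mem_singleton] at hw
    rw [hw, ← List.length_pos_iff]
    omega
  | cons d ds ih =>
    rw [List.pairwise_cons] at hds
    have had := hds.1 d (by simp)
    have hdn := hn d (by simp)
    rw [compFrom_cons, splitByComp]
    obtain ⟨i1, i2⟩ := ih d (W.drop (d - a)) (by simp; omega) hds.2 (fun x hx => hn x (List.mem_cons_of_mem _ hx))
    constructor
    · rw [List.flatten_cons, i1, List.take_append_drop]
    · intro w hw
      rcases List.mem_cons.1 hw with rfl | hw
      · rw [← List.length_pos_iff, List.length_take]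
        omega
      · exact i2 w hw

theorem refines_split (ds : List ℕ) (a n : ℕ) (W : List A) (hW : W.length = n - a)
    (hds : (a :: ds).Pairwise (· < ·)) (hn : ∀ d ∈ a :: ds, d < n) (ws : Sentence A) :
    Refines ws (splitByComp W (compFrom a ds n)) ↔
      ws.flatten = W ∧ ∀ d ∈ ds, ∃ p s, ws = p ++ s ∧ p.flatten.length = d - a := by
  induction ds generalizing a W ws with
  | nil =>
    have := hn a (by simp)
    rw [compFrom_nil, splitByComp, splitByComp, ← hW, List.take_length, refines_cons]
    constructor
    · rintro ⟨p, ws', h1, h2, h3, h4⟩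
      rw [refines_nil] at h4
      subst h4
      rw [List.append_nil] at h2
      subst h2
      exact ⟨h3, by simp⟩
    · rintro ⟨h, _⟩
      refine ⟨ws, [], ?_, by simp, h, refines_nil.2 rfl⟩
      rintro rfl
      rw [← h] at hW
      simp at hW
      omega
  | cons d ds ih =>
    rw [List.pairwise_cons] at hds
    have had := hds.1 d (by simp)
    have hdn := hn d (by simp)
    have hds' := (List.pairwise_cons.1 hds.2).1
    have IH := ih d (W.drop (d - a)) (by simp; omega) hds.2 (fun x hx => hn x (List.mem_cons_of_mem _ hx))
    rw [compFrom_cons, splitByComp, refines_cons]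
    constructor
    · rintro ⟨p, ws', h1, h2, h3, h4⟩
      rw [IH] at h4
      have hpl : p.flatten.length = d - a := by rw [h3, List.length_take]; omega
      refine ⟨by rw [h2, List.flatten_append, h3, h4.1, List.take_append_drop], ?_⟩
      intro e he
      rcases List.mem_cons.1 he with rfl | he
      · exact ⟨p, ws', h2, hpl⟩
      · obtain ⟨p', s', h5, h6⟩ := h4.2 e he
        refine ⟨p ++ p', s', by rw [h2, h5, List.append_assoc], ?_⟩
        have := hds' e he
        rw [List.flatten_append, List.length_append]
        omega
    · rintro ⟨hf, hsp⟩
      obtain ⟨p, s, h1, h2⟩ := hsp d (by simp)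
      have hps : p.flatten ++ s.flatten = W := by rw [← hf, h1, List.flatten_append]
      refine ⟨p, s, ?_, h1, ?_, ?_⟩
      · rintro rfl
        simp at h2; omega
      · rw [← hps, ← h2, List.take_left]
      · rw [IH]
        refine ⟨by rw [← hps, ← h2, List.drop_left], ?_⟩
        intro e he
        have hde := hds' e he
        obtain ⟨p', s', h3, h4⟩ := hsp e (List.mem_cons_of_mem _ he)
        rw [h1, List.append_eq_append_iff] at h3
        rcases h3 with ⟨as, h5, h6⟩ | ⟨bs, h5, h6⟩
        · refine ⟨as, s', h6, ?_⟩
          rw [h5, List.flatten_append, List.length_append] at h4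
          omega
        · rw [h5, List.flatten_append, List.length_append] at h2
          omega

theorem descList_sorted (f : Filling) : (0 :: descList f).Pairwise (· < ·) := by
  rw [List.pairwise_cons]
  constructor
  · intro d hd
    rw [descList, List.mem_filter, List.mem_range'_1] at hd
    omega
  · exact List.Pairwise.filter _ List.pairwise_lt_range'

theorem mem_descList {f : Filling} {d : ℕ} : d ∈ descList f ↔
    1 ≤ d ∧ d < nBoxes f ∧ rowOf f d < rowOf f (d + 1) := by
  rw [descList, List.mem_filter, List.mem_range'_1, decide_eq_true_eq]
  constructor
  · rintro ⟨h1, h2⟩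
    exact ⟨by omega, by omega, h2⟩
  · rintro ⟨h1, h2, h3⟩
    exact ⟨by omega, h3⟩

theorem descList_lt {f : Filling} (h : nBoxes f ≠ 0) : ∀ d ∈ 0 :: descList f, d < nBoxes f := by
  intro d hd
  rcases List.mem_cons.1 hd with rfl | hd
  · omega
  · exact (mem_descList.1 hd).2.1

theorem readWord_length [Inhabited A] (J : Sentence A) (f : Filling) : (readWord J f).length = nBoxes f := by
  simp [readWord]

theorem coA_flatten [Inhabited A] (J : Sentence A) (f : Filling) :
    (coA J f).flatten = readWord J f ∧ IsSentence (coA J f) := by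
  unfold coA
  split
  · rename_i h
    refine ⟨?_, by simp [IsSentence]⟩
    have := readWord_length J f
    rw [h, List.length_eq_zero_iff] at this
    rw [this]; rfl
  · rename_i h
    exact split_flatten (descList f) 0 (nBoxes f) (readWord J f) (readWord_length J f) (descList_sorted f)
      (descList_lt h)

theorem refines_coA [Inhabited A] (J : Sentence A) (f : Filling) (ws : Sentence A) (hws : ∀ w ∈ ws, w ≠ []) :
    Refines ws (coA J f) ↔ ws.flatten = readWord J f ∧
      ∀ d ∈ descList f, ∃ p s, ws = p ++ s ∧ p.flatten.length = d := by
  unfold coA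
  split
  · rename_i h
    have hr := readWord_length J f
    rw [h, List.length_eq_zero_iff] at hr
    rw [hr, refines_nil]
    constructor
    · rintro rfl
      refine ⟨rfl, ?_⟩
      intro d hd
      have := mem_descList.1 hd
      omega
    · rintro ⟨h1, _⟩
      cases ws with
      | nil => rfl
      | cons w ws =>
        rw [List.flatten_cons, List.append_eq_nil_iff] at h1
        exact absurd h1.1 (hws w (by simp))
  · rename_i h
    exact refines_split (descList f) 0 (nBoxes f) (readWord J f) (readWord_length J f) (descList_sorted f)
      (descList_lt h) ws

theorem le_maxEntry {f : Filling} {x : ℕ} (h : x ∈ f.flatten) : x ≤ maxEntry f := by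
  unfold maxEntry
  generalize f.flatten = l at h
  induction l with
  | nil => simp at h
  | cons a l ih =>
    rw [List.foldr_cons]
    rcases List.mem_cons.1 h with rfl | h
    · exact le_max_left _ _
    · exact (ih h).trans (le_max_right _ _)

theorem mem_flatten_iff {f : Filling} {x : ℕ} : x ∈ f.flatten ↔ ∃ b ∈ boxes f, entryAt f b = x := by
  rw [← boxes_map_entry, List.mem_map]

theorem typeWord_ne_nil [Inhabited A] {J : Sentence A} {f : Filling} (hs : f.map List.length = J.map List.length) (v : ℕ) :
    typeWord J f v ≠ [] ↔ v ∈ f.flatten := by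
  rw [typeWord_eq hs, mem_flatten_iff, Ne, List.map_eq_nil_iff, List.filter_eq_nil_iff]
  push Not
  constructor
  · rintro ⟨b, hb, h⟩
    exact ⟨b, (rboxes_perm f).mem_iff.1 hb, by simpa using h⟩
  · rintro ⟨b, hb, h⟩
    exact ⟨b, (rboxes_perm f).mem_iff.2 hb, by simpa using h⟩

/-- The list of indices of `x_T`. -/
def valList (J : Sentence A) (f : Filling) : List ℕ :=
  ((List.range (maxEntry f)).map (· + 1)).filter (fun v => !(typeWord J f v).isEmpty)

theorem monoOf_eq (J : Sentence A) (f : Filling) :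
    monoOf J f = ((valList J f).map (typeWord J f), valList J f) := rfl

theorem valList_sorted (J : Sentence A) (f : Filling) : (valList J f).Pairwise (· < ·) := by
  apply List.Pairwise.filter
  rw [List.pairwise_map]
  exact List.Pairwise.imp (fun h => by omega) List.pairwise_lt_range

theorem mem_valList [Inhabited A] {J : Sentence A} {f : Filling} (hT : IsCIT J f) {v : ℕ} :
    v ∈ valList J f ↔ v ∈ f.flatten := by
  rw [← typeWord_ne_nil hT.1, valList, List.mem_filter, List.mem_map]
  simp only [List.mem_range, Bool.not_eq_true', List.isEmpty_eq_false_iff, and_iff_right_iff_imp]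
  intro h
  rw [typeWord_ne_nil hT.1] at h
  have h1 := le_maxEntry h
  have h2 := hT.2.2.2 v h
  exact ⟨v - 1, by omega, by omega⟩

theorem monoOf_valid [Inhabited A] {J : Sentence A} {f : Filling} (hT : IsCIT J f) : ValidMono (monoOf J f) := by
  rw [monoOf_eq]
  refine ⟨by simp, ?_, ?_, ?_⟩
  · rw [List.Chain', List.isChain_iff_pairwise]
    exact valList_sorted J f
  · intro j hj
    exact hT.2.2.2 j ((mem_valList hT).1 hj)
  · intro w hw
    rw [List.mem_map] at hw
    obtain ⟨v, hv, rfl⟩ := hw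
    rw [typeWord_ne_nil hT.1]
    exact (mem_valList hT).1 hv

/-- Forward direction. -/
theorem forward [Inhabited A] {J : Sentence A} (hJ : IsSentence J) {T : Filling} (hT : IsCIT J T) :
    mapF (gH (HM (monoOf J T).1 (monoOf J T).2)) (stdFill T) = T ∧
    Refines (monoOf J T).1 (coA J (stdFill T)) := by
  obtain ⟨H, hc, hpos, hTH⟩ := exists_compat hJ hT
  have hU := stdFill_standard T
  have hC := stdFill_cit hJ hT
  have hw : ∀ v, typeWord J T v = rowWith (readWord J (stdFill T)) H v := by
    intro v
    have := typeWord_mapF hJ hU hC hc v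
    rwa [← hTH] at this
  have hvs : ∀ x ∈ H, x ∈ valList J T := by
    intro x hx
    rw [mem_valList hT, mem_flatten_iff]
    obtain ⟨i, hi, rfl⟩ := List.getElem_of_mem hx
    obtain ⟨b, hb, hbe⟩ := (std_mem hU (i + 1)).2 ⟨by omega, by rw [← hc.1]; omega⟩
    refine ⟨b, boxes_stdFill T ▸ hb, ?_⟩
    conv_lhs => rw [hTH]
    rw [entryAt_mapF hb, hbe, gH, Nat.add_sub_cancel, List.getD_eq_getElem _ _ hi]
  have hlen : (readWord J (stdFill T)).length = H.length := by rw [readWord_length, hc.1]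
  obtain ⟨r1, r2⟩ := reconstruct (readWord J (stdFill T)) H hlen hc.2.1
    (valList J T) (valList_sorted J T) hvs
  have hm : (valList J T).map (typeWord J T) = (valList J T).map (rowWith (readWord J (stdFill T)) H) :=
    List.map_congr_left (fun v _ => hw v)
  have hval := monoOf_valid hT
  rw [monoOf_eq, hm] at hval ⊢
  simp only
  refine ⟨by rw [r2, ← hTH], ?_⟩
  rw [refines_coA _ _ _ hval.2.2.2]
  refine ⟨r1, ?_⟩
  intro d hd
  rw [mem_descList] at hd
  refine split_of_HM_strict (js := valList J T) (by simp) hd.1 (by rw [r1, readWord_length]; exact hd.2.1) ?_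
  rw [r2]
  exact hc.2.2 d hd.1 hd.2.1 hd.2.2

/-- Backward direction. -/
theorem backward [Inhabited A] {J : Sentence A} (hJ : IsSentence J) {U : Filling} (hU : IsStandardF U)
    (hC : IsCIT J U) {m : Mono A} (hm : ValidMono m) (hr : Refines m.1 (coA J U)) :
    IsCIT J (mapF (gH (HM m.1 m.2)) U) ∧ monoOf J (mapF (gH (HM m.1 m.2)) U) = m ∧
    stdFill (mapF (gH (HM m.1 m.2)) U) = U := by
  obtain ⟨ws, js⟩ := m
  obtain ⟨m1, m2, m3, m4⟩ := hm
  simp only at *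
  rw [List.Chain', List.isChain_iff_pairwise] at m2
  rw [refines_coA _ _ _ m4] at hr
  obtain ⟨hf, hd⟩ := hr
  have hfl : ws.flatten.length = nBoxes U := by rw [hf, readWord_length]
  have hc : Compat U (HM ws js) := by
    refine ⟨by rw [HM_length m1, hfl], HM_sorted m2, ?_⟩
    intro d h1 h2 h3
    obtain ⟨p, s, h4, h5⟩ := hd d (mem_descList.2 ⟨h1, h2, h3⟩)
    subst h4
    exact HM_strict_of_split m1 m2 h1 (by rw [hfl]; exact h2) h5
  have hT := mapF_cit hJ hU hC hc (fun x hx => m3 x (HM_mem hx))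
  refine ⟨hT, ?_, stdFill_mapF hJ hU hC hc⟩
  have hw : ∀ v, typeWord J (mapF (gH (HM ws js)) U) v = rowWith ws.flatten (HM ws js) v := by
    intro v
    rw [typeWord_mapF hJ hU hC hc, hf]
  have hvs : valList J (mapF (gH (HM ws js)) U) = js := by
    apply List.Perm.eq_of_pairwise (le := (· < ·))
    · intro a b _ _ h1 h2; omega
    · exact valList_sorted _ _
    · exact m2
    · rw [List.perm_ext_iff_of_nodup ((valList_sorted _ _).imp (fun h => h.ne)) (m2.imp (fun h => h.ne))]
      intro v
      rw [mem_valList hT, ← typeWord_ne_nil hT.1, hw]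
      constructor
      · intro h
        by_contra hv
        exact h (rowWith_HM_not_mem hv)
      · intro h
        apply m4
        have := List.mem_map_of_mem (f := rowWith ws.flatten (HM ws js)) h
        rwa [map_rowWith_HM m1 m2] at this
  rw [monoOf_eq, hvs]
  have : js.map (typeWord J (mapF (gH (HM ws js)) U)) = ws := by
    conv_rhs => rw [← map_rowWith_HM m1 m2]
    exact List.map_congr_left (fun v _ => hw v)
  rw [this]

end ColoredImm

namespace ColoredImm
variable {A : Type*}

theorem finite_sentences (n : ℕ) (w : List A) (hn : w.length ≤ n) :
    {ws : Sentence A | (∀ u ∈ ws, u ≠ []) ∧ ws.flatten = w}.Finite := by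
  induction n generalizing w with
  | zero =>
    apply Set.Finite.subset (Set.finite_singleton ([] : Sentence A))
    rintro ws ⟨h1, h2⟩
    cases ws with
    | nil => rfl
    | cons u ws =>
      have : w = [] := List.length_eq_zero_iff.1 (by omega)
      rw [this, List.flatten_cons, List.append_eq_nil_iff] at h2
      exact absurd h2.1 (h1 u (by simp))
  | succ n ih =>
    have hfin : (⋃ i ∈ Set.Icc 1 (n + 1), (List.cons (w.take i)) ''
        {ws : Sentence A | (∀ u ∈ ws, u ≠ []) ∧ ws.flatten = w.drop i}).Finite := by
      apply Set.Finite.biUnion (Set.finite_Icc 1 (n + 1))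
      intro i hi
      apply Set.Finite.image
      apply ih
      rw [Set.mem_Icc] at hi
      simp; omega
    apply Set.Finite.subset ((Set.finite_singleton ([] : Sentence A)).union hfin)
    rintro ws ⟨h1, h2⟩
    cases ws with
    | nil => left; rfl
    | cons u ws =>
      right
      have hu : 0 < u.length := List.length_pos_iff.2 (h1 u (by simp))
      rw [List.flatten_cons] at h2
      have hl := congrArg List.length h2
      rw [List.length_append] at hl
      simp only [Set.mem_iUnion]
      refine ⟨u.length, Set.mem_Icc.2 ⟨hu, by omega⟩, ws, ⟨fun x hx => h1 x (by simp [hx]), ?_⟩, ?_⟩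
      · rw [← h2, List.drop_left]
      · rw [← h2, List.take_left]

open Classical in
theorem FQ_apply (C : Sentence A) (m : Mono A) :
    FQ C m = if Refines m.1 C ∧ ValidMono m then 1 else 0 := by
  have hfin : ({J : Sentence A | Refines J C} ∩ Function.support MQ).Finite := by
    apply Set.Finite.subset (finite_sentences C.flatten.length C.flatten le_rfl)
    rintro I ⟨h1, h2⟩
    rw [Function.mem_support] at h2
    refine ⟨?_, refines_flatten h1⟩
    by_contra hcon
    apply h2
    funext m
    rw [MQ, if_neg]
    · rfl
    · rintro ⟨rfl, hv⟩
      exact hcon hv.2.2.2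
  rw [FQ, finsum_mem_eq_sum _ hfin, Finset.sum_apply]
  have hval : ∀ I ∈ hfin.toFinset, MQ I m = if m.1 = I then (if ValidMono m then 1 else 0) else 0 := by
    intro I _
    rw [MQ]
    split_ifs <;> simp_all
  rw [Finset.sum_congr rfl hval, Finset.sum_ite_eq]
  by_cases hv : ValidMono m
  · simp only [hv, and_true, if_true]
    congr 1
    rw [Set.Finite.mem_toFinset, Set.mem_inter_iff, Function.mem_support, Set.mem_setOf_eq, eq_iff_iff,
      and_iff_left_iff_imp]
    intro _ h0
    have := congrFun h0 m
    rw [MQ, if_pos ⟨rfl, hv⟩] at this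
    simp at this
  · simp [hv]

theorem finite_lists (n k : ℕ) : {l : List ℕ | l.length = n ∧ ∀ x ∈ l, x ≤ k}.Finite := by
  induction n with
  | zero =>
    apply Set.Finite.subset (Set.finite_singleton ([] : List ℕ))
    rintro l ⟨h, _⟩
    exact List.length_eq_zero_iff.1 h
  | succ n ih =>
    apply Set.Finite.subset (Set.Finite.image2 List.cons (Set.finite_Iic k) ih)
    rintro l ⟨h1, h2⟩
    cases l with
    | nil => simp at h1
    | cons a l =>
      exact ⟨a, h2 a (by simp), l, ⟨by simpa using h1, fun x hx => h2 x (by simp [hx])⟩, rfl⟩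

theorem finite_scit (J : Sentence A) : {f : Filling | IsCIT J f ∧ IsStandardF f}.Finite := by
  apply Set.Finite.of_finite_image (f := List.flatten)
  · apply Set.Finite.subset (finite_lists (size J) (size J))
    rintro _ ⟨f, ⟨h1, h2⟩, rfl⟩
    have hlen : f.flatten.length = size J := by
      rw [List.length_flatten, h1.1]; rfl
    refine ⟨hlen, ?_⟩
    intro x hx
    have := h2.mem_iff.1 hx
    rw [List.mem_range'_1, nBoxes, hlen] at this
    omega
  · intro f hf g hg h
    exact List.eq_iff_flatten_eq.2 ⟨h, by rw [hf.1.1, hg.1.1]⟩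

open Classical in
theorem dualImm_apply [Inhabited A] {J : Sentence A} (hJ : IsSentence J) (m : Mono A) :
    dualImm J m = ∑ U ∈ (finite_scit J).toFinset, FQ (coA J U) m := by
  simp only [FQ_apply]
  rw [Finset.sum_boole, dualImm]
  congr 1
  rw [← Set.ncard_coe_finset]
  apply Set.BijOn.ncard_eq (f := stdFill)
  refine ⟨?_, ?_, ?_⟩
  · rintro T ⟨hT, rfl⟩
    simp only [Finset.coe_filter, Set.Finite.mem_toFinset, Set.mem_setOf_eq]
    exact ⟨⟨stdFill_cit hJ hT, stdFill_standard T⟩, (forward hJ hT).2, monoOf_valid hT⟩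
  · rintro T ⟨hT, h1⟩ T' ⟨hT', h2⟩ h
    rw [← (forward hJ hT).1, ← (forward hJ hT').1, h1, h2, h]
  · intro U hU
    simp only [Finset.coe_filter, Set.Finite.mem_toFinset, Set.mem_setOf_eq] at hU
    obtain ⟨⟨h1, h2⟩, h3, h4⟩ := hU
    obtain ⟨a, b, c⟩ := backward hJ h2 h1 h4 h3
    exact ⟨_, ⟨a, b⟩, c⟩

theorem coA_mem [Inhabited A] {J : Sentence A} {U : Filling} (hU : IsCIT J U) :
    IsSentence (coA J U) ∧ size (coA J U) = size J := by
  refine ⟨(coA_flatten J U).2, ?_⟩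
  rw [size, ← List.length_flatten, (coA_flatten J U).1, readWord_length, nBoxes, List.length_flatten, hU.1]
  rfl

open Classical in
theorem sum_LJC [Inhabited A] (J : Sentence A) :
    ∑ᶠ C ∈ {C : Sentence A | IsSentence C ∧ size C = size J}, (LJC J C : ℚ) • FQ C =
    ∑ U ∈ (finite_scit J).toFinset, FQ (coA J U) := by
  have hL : ∀ C, LJC J C = ((finite_scit J).toFinset.filter (fun U => coA J U = C)).card := by
    intro C
    rw [LJC, ← Set.ncard_coe_finset]
    congr 1
    ext U
    simp [and_assoc]
  rw [Finset.sum_comp (fun C => FQ C) (coA J)]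
  rw [finsum_mem_eq_sum_of_inter_support_eq (t := ((finite_scit J).toFinset.image (coA J)))]
  · apply Finset.sum_congr rfl
    intro C _
    rw [hL, Nat.cast_smul_eq_nsmul]
  · ext C
    simp only [Set.mem_inter_iff, Function.mem_support, and_congr_left_iff]
    intro h
    simp only [Finset.coe_image, Set.Finite.coe_toFinset, Set.mem_setOf_eq, Set.mem_image]
    constructor
    · intro _
      have hne : LJC J C ≠ 0 := by
        intro h0
        apply h
        rw [h0]; simp
      rw [hL, Finset.card_ne_zero] at hne
      obtain ⟨U, hU⟩ := hne
      rw [Finset.mem_filter, Set.Finite.mem_toFinset] at hU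
      exact ⟨U, hU⟩
    · rintro ⟨U, hU, rfl⟩
      exact coA_mem hU.1

end ColoredImm

namespace ColoredImm

/-- The colored dual immaculate function expands positively into the
colored fundamental basis: `𝔖*_J = Σ_C L_{J,C} F_C`, summed over sentences `C` with
`|C| = |J|`; equivalently `𝔖*_J = Σ_U F_{co_A(U)}`, summed over all standard colored
immaculate tableaux `U` of shape `J`. -/
theorem statement6 {A : Type*} [Inhabited A] (J : Sentence A) (hJ : IsSentence J) :
    (dualImm J =
      ∑ᶠ C ∈ {C : Sentence A | IsSentence C ∧ size C = size J}, (LJC J C : ℚ) • FQ C) ∧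
    (dualImm J = ∑ᶠ U ∈ {f : Filling | IsCIT J f ∧ IsStandardF f}, FQ (coA J U)) := by
  have h : dualImm J = ∑ U ∈ (finite_scit J).toFinset, FQ (coA J U) := by
    funext m
    rw [dualImm_apply hJ, Finset.sum_apply]
  rw [sum_LJC, finsum_mem_eq_finite_toFinset_sum _ (finite_scit J)]
  exact ⟨h, h⟩

end ColoredImm
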